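/- Let d = 4, m = 0, let M ∈ ℕ with M ≤ d/2 − 1 (i.e. M = 1), let L ≥ 1, and let q be a real number with 0 < q ≤ C·L for some C > 0. Then for any 0 < β ≤ 1, any N ≥ 0 and any w ∈ C^{M,d+1}(ℝ^d): I_q(0; A, 0, L) = L^d·σ_∞(w; A, 0) + O( β^{−M−1} q^M L^{d−M} ⟨log(q/(Lβ))⟩ ‖w‖_{M,d+1} ) + O_{C,N}( (q^N L^{d−N} + β^N)( ‖w‖_{M−1,d+1} + L q^{−1} ‖w‖_{0,d+1} ) ), where I_q(0; A, 0, L) := L^d ∫_{ℝ^d} w(z) h(q/L, F(z)) dz. -/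

import Mathlib

open MeasureTheory Filter Topology Set
open scoped BigOperators Classical

noncomputable section

/-- `e_q(x) := exp(2πix/q)`. -/
def eFun (q : ℕ) (x : ℝ) : ℂ := Complex.exp (2 * Real.pi * Complex.I * x / q)

/-- `F(z) = (1/2)⟨Az, z⟩` for an integer matrix `A`. -/
def Fq {d : ℕ} (A : Matrix (Fin d) (Fin d) ℤ) (z : Fin d → ℝ) : ℝ :=
  (1 / 2) * ∑ i, ∑ j, (A i j : ℝ) * z i * z j

/-- The exponential sum `S_q(c; A, t)`. -/
def Sq {d : ℕ} (q : ℕ) (c : Fin d → ℤ) (A : Matrix (Fin d) (Fin d) ℤ) (t : ℤ) : ℂ :=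
  ∑ a ∈ (Finset.range q).filter (fun a => Nat.Coprime a q),
    ∑ b : Fin d → Fin q,
      eFun q ((a : ℝ) * (Fq A (fun i => (b i : ℝ)) - (t : ℝ)) + ∑ i, (c i : ℝ) * (b i : ℝ))

/-- `σ_p(A,t) = Σ_l p^{-dl} S_{p^l}(0; A, t)`. -/
def sigmaP {d : ℕ} (p : ℕ) (A : Matrix (Fin d) (Fin d) ℤ) (t : ℤ) : ℂ :=
  ∑' l : ℕ, ((p : ℂ) ^ (d * l))⁻¹ * Sq (p ^ l) 0 A t

/-- `σ(A,t) = Π_p σ_p(A,t)`. -/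
def sigmaA {d : ℕ} (A : Matrix (Fin d) (Fin d) ℤ) (t : ℤ) : ℂ :=
  ∏' p : Nat.Primes, sigmaP (p : ℕ) A t

/-- `σ*(A) = Π_p (1 - p⁻¹) σ_p(A,0)`. -/
def sigmaStar {d : ℕ} (A : Matrix (Fin d) (Fin d) ℤ) : ℂ :=
  ∏' p : Nat.Primes, (1 - ((p : ℕ) : ℂ)⁻¹) * sigmaP (p : ℕ) A 0

/-- The weight `w₀`. -/
def wZero (x : ℝ) : ℝ := if |x| < 1 then Real.exp (1 / (x ^ 2 - 1)) else 0

def cZero : ℝ := ∫ x : ℝ, wZero x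

def omegaFun (x : ℝ) : ℝ := (4 / cZero) * wZero (4 * x - 3)

/-- The function `h(x,y) = Σ_{j≥1} (1/(xj)) [ω(xj) − ω(|y|/(xj))]`. -/
def hFun (x y : ℝ) : ℝ :=
  ∑' j : ℕ, (1 / (x * ((j : ℝ) + 1))) *
    (omegaFun (x * ((j : ℝ) + 1)) - omegaFun (|y| / (x * ((j : ℝ) + 1))))

/-- Japanese bracket `⟨z⟩ = max(1, ‖z‖)`. -/
def jap {d : ℕ} (z : Fin d → ℝ) : ℝ := max 1 ‖z‖

def normSet {d : ℕ} (n1 : ℕ) (n2 : ℝ) (f : (Fin d → ℝ) → ℝ) : Set ℝ :=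
  {r | ∃ (k : ℕ) (z : Fin d → ℝ), k ≤ n1 ∧ r = ‖iteratedFDeriv ℝ k f z‖ * jap z ^ n2}

/-- The norm `‖f‖_{n1,n2}`. -/
def wNorm {d : ℕ} (n1 : ℕ) (n2 : ℝ) (f : (Fin d → ℝ) → ℝ) : ℝ := sSup (normSet n1 n2 f)

/-- Membership in the class `C^{n1,n2}`. -/
def MemC {d : ℕ} (n1 : ℕ) (n2 : ℝ) (f : (Fin d → ℝ) → ℝ) : Prop :=
  ContDiff ℝ n1 f ∧ BddAbove (normSet n1 n2 f)

def jap1 (y : ℝ) : ℝ := max 1 |y|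

def normSet1 (n1 : ℕ) (n2 : ℝ) (f : ℝ → ℝ) : Set ℝ :=
  {r | ∃ (k : ℕ) (y : ℝ), k ≤ n1 ∧ r = |iteratedDeriv k f y| * jap1 y ^ n2}

def wNorm1 (n1 : ℕ) (n2 : ℝ) (f : ℝ → ℝ) : ℝ := sSup (normSet1 n1 n2 f)

def MemC1 (n1 : ℕ) (n2 : ℝ) (f : ℝ → ℝ) : Prop :=
  ContDiff ℝ n1 f ∧ BddAbove (normSet1 n1 n2 f)

/-- `N_L(w; A, m) = Σ_{z ∈ L⁻¹ℤ^d, F(z)=m} w(z)`. -/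
def NL {d : ℕ} (A : Matrix (Fin d) (Fin d) ℤ) (L m : ℝ) (w : (Fin d → ℝ) → ℝ) : ℝ :=
  ∑' v : Fin d → ℤ,
    if Fq A (fun i => (v i : ℝ) / L) = m then w (fun i => (v i : ℝ) / L) else 0

/-- `σ_∞(w; A, m)` as a limit. -/
def IsSigmaInf {d : ℕ} (A : Matrix (Fin d) (Fin d) ℤ) (m : ℝ) (w : (Fin d → ℝ) → ℝ)
    (s : ℝ) : Prop :=
  Tendsto (fun ε : ℝ => (1 / (2 * ε)) * ∫ z in {z : Fin d → ℝ | |Fq A z - m| ≤ ε}, w z)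
    (nhdsWithin 0 (Set.Ioi 0)) (nhds s)

def intCast' {d : ℕ} (c : Fin d → ℤ) : Fin d → ℝ := fun i => (c i : ℝ)

/-- the matrix of `F_d(x,y) = Σ x_i y_i` on `ℤ^{2s}`. -/
def Ad (s : ℕ) : Matrix (Fin (2 * s)) (Fin (2 * s)) ℤ :=
  fun i j => if i.val + s = j.val ∨ j.val + s = i.val then 1 else 0

/-- `F(z) = (1/2)⟨Az, z⟩` for a real matrix `A`. -/
def FqR {d : ℕ} (A : Matrix (Fin d) (Fin d) ℝ) (z : Fin d → ℝ) : ℝ :=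
  (1 / 2) * ∑ i, ∑ j, A i j * z i * z j

/-!
One can write `h(x, y) = c(x) + x⁻¹ k(y / x)`, and the end-point corrected trapezoid rule for smooth
bumps shows that `c(x) = O(x)` and that the odd primitive `K` of `k` is `sign / 2` up to
`O(1 / (1 + s²))`. The vector field `∇F / |∇F|²` moves `F` at unit speed, so for
`D w = div (w ∇F / |∇F|²)` the divergence theorem gives `∫ w h(x, F) = c(x) ∫ w - ∫ K(F / x) D w`
and, by the same computation with a truncated linear function in place of `K`,
`σ_∞(w) = -∫ (sign F / 2) D w`. The difference is therefore at most a multiple of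
`x ∫ |w| + ∫ |D w| / (1 + (F / x)²)`. Integrating by parts once more, now against
`x arctan (F / x)`, bounds the last integral by a multiple of
`x ∫ (1 + |z|)⁻ᵈ |z|⁻² / (|z|² + x) dz`, and this is `O(x (1 + |log x|))` as soon as `d ≥ 4`.
-/

section TrapezoidRule

lemma abs_le_of_abs_deriv_le_pow {φ φ' : ℝ → ℝ} {a b c : ℝ} (k : ℕ) (hφa : φ a = 0)
    (hφ : ∀ t, HasDerivAt φ (φ' t) t) (hbound : ∀ t ∈ Icc a b, |φ' t| ≤ c * (t - a) ^ k) :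
    ∀ t ∈ Icc a b, |φ t| ≤ c / (k + 1) * (t - a) ^ (k + 1) := by
  have hB : ∀ t, HasDerivAt (fun t => c / (k + 1) * (t - a) ^ (k + 1)) (c * (t - a) ^ k) t := by
    intro t
    refine ((((hasDerivAt_id' t).sub_const a).pow (k + 1)).const_mul (c / (k + 1))).congr_deriv ?_
    push_cast
    have hk : (k : ℝ) + 1 ≠ 0 := by positivity
    field_simp
  exact image_norm_le_of_norm_deriv_right_le_deriv_boundary
    (fun t _ => (hφ t).continuousAt.continuousWithinAt) (fun t _ => (hφ t).hasDerivWithinAt)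
    (by simp [hφa]) hB (fun t ht => hbound t (Ico_subset_Icc_self ht))

/-- The error of the end-point corrected trapezoid rule for `∫ f` over `[a, t]`. -/
def trapezoidError (f f' : ℝ → ℝ) (a t : ℝ) : ℝ :=
  (t - a) / 2 * (f a + f t) - (t - a) ^ 2 / 12 * (f' t - f' a) - ∫ v in a..t, f v

variable {f f₁ f₂ f₃ : ℝ → ℝ} {Z : ℝ}

lemma abs_trapezoidError_le (h₁ : ∀ t, HasDerivAt f (f₁ t) t) (h₂ : ∀ t, HasDerivAt f₁ (f₂ t) t)
    (h₃ : ∀ t, HasDerivAt f₂ (f₃ t) t) {a b : ℝ} (hab : a ≤ b) (hZ : ∀ t ∈ Icc a b, |f₃ t| ≤ Z) :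
    |trapezoidError f f₁ a b| ≤ Z * (b - a) ^ 4 / 72 := by
  have hf : Continuous f := continuous_iff_continuousAt.2 fun t => (h₁ t).continuousAt
  have hlin (t : ℝ) : HasDerivAt (fun t => t - a) 1 t := (hasDerivAt_id' t).sub_const a
  set χ : ℝ → ℝ := fun t => f₁ a - f₁ t + (t - a) * f₂ t
  set E' : ℝ → ℝ := fun t =>
    (f a - f t) / 2 + (t - a) / 3 * f₁ t + (t - a) / 6 * f₁ a - (t - a) ^ 2 / 12 * f₂ t
  have hχ (t : ℝ) : HasDerivAt χ ((t - a) * f₃ t) t :=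
    (((h₂ t).const_sub (f₁ a)).add ((hlin t).mul (h₃ t))).congr_deriv (by ring)
  have hE' (t : ℝ) : HasDerivAt E' (χ t / 6 - (t - a) ^ 2 / 12 * f₃ t) t :=
    ((((((h₁ t).const_sub (f a)).div_const 2).add (((hlin t).div_const 3).mul (h₂ t))).add
      (((hlin t).div_const 6).mul_const (f₁ a))).sub
      ((((hlin t).pow 2).div_const 12).mul (h₃ t))).congr_deriv (by simp [χ]; ring)
  have hE (t : ℝ) : HasDerivAt (trapezoidError f f₁ a) (E' t) t :=
    (((((hlin t).div_const 2).mul ((h₁ t).const_add (f a))).sub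
      ((((hlin t).pow 2).div_const 12).mul ((h₂ t).sub_const (f₁ a)))).sub
      (hf.integral_hasStrictDerivAt a t).hasDerivAt).congr_deriv (by simp [E']; ring)
  have hχ_le := abs_le_of_abs_deriv_le_pow (c := Z) 1
    (show χ a = 0 by simp [χ]) hχ fun t ht => by
    rw [abs_mul, abs_of_nonneg (sub_nonneg.2 ht.1), pow_one, mul_comm]
    exact mul_le_mul_of_nonneg_right (hZ t ht) (sub_nonneg.2 ht.1)
  have hE'_le := abs_le_of_abs_deriv_le_pow (c := Z / 6) 2
    (show E' a = 0 by simp [E']) hE' fun t ht => by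
    have hχt := hχ_le t ht
    have hf₃t : |(t - a) ^ 2 / 12 * f₃ t| ≤ (t - a) ^ 2 / 12 * Z := by
      rw [abs_mul, abs_of_nonneg (by positivity)]
      exact mul_le_mul_of_nonneg_left (hZ t ht) (by positivity)
    calc |χ t / 6 - (t - a) ^ 2 / 12 * f₃ t| ≤ |χ t| / 6 + |(t - a) ^ 2 / 12 * f₃ t| := by
          simpa only [abs_div, Nat.abs_ofNat] using abs_sub (χ t / 6) ((t - a) ^ 2 / 12 * f₃ t)
      _ ≤ Z / 6 * (t - a) ^ 2 := by push_cast at hχt; linarith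
  have hE_le := abs_le_of_abs_deriv_le_pow 3 (by simp [trapezoidError]) hE hE'_le b ⟨hab, le_rfl⟩
  exact hE_le.trans_eq (by push_cast; ring)

lemma sum_trapezoidError (hf : Continuous f) (y : ℝ) (n : ℕ) :
    ∑ j ∈ Finset.range n, trapezoidError f f₁ (j * y) ((j + 1 : ℕ) * y) =
      y * (f 0 / 2 + ∑ j ∈ Finset.range n, f (y * (j + 1)) - f (n * y) / 2) -
        y ^ 2 / 12 * (f₁ (n * y) - f₁ 0) - ∫ v in 0..(n * y), f v := by
  induction n with
  | zero => simp
  | succ n ih =>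
    rw [Finset.sum_range_succ, Finset.sum_range_succ, ih,
      ← intervalIntegral.integral_add_adjacent_intervals (a := 0) (b := n * y)
        (c := (n + 1 : ℕ) * y) (hf.intervalIntegrable _ _) (hf.intervalIntegrable _ _),
      trapezoidError]
    push_cast
    ring_nf

lemma abs_trapezoid_sum_sub_integral_le (h₁ : ∀ t, HasDerivAt f (f₁ t) t)
    (h₂ : ∀ t, HasDerivAt f₁ (f₂ t) t) (h₃ : ∀ t, HasDerivAt f₂ (f₃ t) t)
    {y : ℝ} (hy : 0 ≤ y) {n : ℕ} (hZ : ∀ t ∈ Icc 0 (n * y), |f₃ t| ≤ Z) :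
    |y * (f 0 / 2 + ∑ j ∈ Finset.range n, f (y * (j + 1)) - f (n * y) / 2) -
      y ^ 2 / 12 * (f₁ (n * y) - f₁ 0) - ∫ v in 0..(n * y), f v| ≤ n * (Z * y ^ 4 / 72) := by
  have hf : Continuous f := continuous_iff_continuousAt.2 fun t => (h₁ t).continuousAt
  have hlen (j : ℕ) : ((j + 1 : ℕ) : ℝ) * y - j * y = y := by push_cast; ring
  rw [← sum_trapezoidError hf]
  refine (Finset.abs_sum_le_sum_abs _ _).trans
    ((Finset.sum_le_card_nsmul _ _ (Z * y ^ 4 / 72) fun j hj => ?_).trans_eq (by simp))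
  have hjn : ((j + 1 : ℕ) : ℝ) * y ≤ n * y :=
    mul_le_mul_of_nonneg_right (by exact_mod_cast Finset.mem_range.1 hj) hy
  have hj0 : (0 : ℝ) ≤ j * y := by positivity
  have := abs_trapezoidError_le h₁ h₂ h₃ (a := j * y) (b := (j + 1 : ℕ) * y)
    (by linarith [hlen j]) fun t ht => hZ t ⟨hj0.trans ht.1, ht.2.trans hjn⟩
  rwa [hlen] at this

lemma integral_eq_integral_of_eq_zero_of_le (hf : Continuous f) {a R b : ℝ}
    (hsupp : ∀ v, R ≤ v → f v = 0) (hRb : R ≤ b) : ∫ v in a..R, f v = ∫ v in a..b, f v := by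
  rw [← intervalIntegral.integral_add_adjacent_intervals (b := R) (c := b)
    (hf.intervalIntegrable _ _) (hf.intervalIntegrable _ _),
    intervalIntegral.integral_congr (a := R) (g := fun _ => 0) fun v hv =>
      hsupp v (uIcc_of_le hRb ▸ hv).1]
  simp

lemma exists_abs_trapezoid_tsum_sub_integral_le (hf : ContDiff ℝ 3 f) {R : ℝ} (hR : 0 ≤ R)
    (hsupp : ∀ v, R ≤ v → f v = 0) (hf0 : deriv f 0 = 0) :
    ∃ C : ℝ, 0 ≤ C ∧ ∀ y : ℝ, 0 < y → y ≤ 1 →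
      |y * (f 0 / 2 + ∑' j : ℕ, f (y * (j + 1))) - ∫ v in 0..R, f v| ≤ C * y ^ 3 := by
  obtain ⟨hf₁, -, hf'⟩ := (contDiff_succ_iff_deriv (n := 2)).1 hf
  obtain ⟨hf₂, -, hf''⟩ := (contDiff_succ_iff_deriv (n := 1)).1 hf'
  obtain ⟨Z, hZ⟩ := (isCompact_Icc (a := 0) (b := R + 2)).exists_bound_of_continuousOn
    (hf''.continuous_deriv le_rfl).continuousOn
  have hZ0 : 0 ≤ Z := (norm_nonneg _).trans (hZ 0 ⟨le_rfl, by linarith⟩)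
  refine ⟨(R + 2) * Z / 72, by positivity, fun y hy hy1 => ?_⟩
  set n : ℕ := ⌈R / y⌉₊ + 1 with hn
  have hRn : R < n * y := by
    rw [← div_lt_iff₀ hy, hn]; push_cast; linarith [Nat.le_ceil (R / y)]
  have hnR : n * y ≤ R + 2 := by
    have hceil : (n : ℝ) ≤ R / y + 2 := by
      rw [hn]; push_cast; linarith [(Nat.ceil_lt_add_one (div_nonneg hR hy.le)).le]
    calc n * y ≤ (R / y + 2) * y := by gcongr
      _ = R + 2 * y := by field_simp
      _ ≤ R + 2 := by linarith
  have htsum : ∑' j : ℕ, f (y * (j + 1)) = ∑ j ∈ Finset.range n, f (y * (j + 1)) := by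
    refine tsum_eq_sum fun j hj => hsupp _ ?_
    have hnj : (n : ℝ) ≤ j := by exact_mod_cast Finset.mem_range.not.1 hj |> not_lt.1
    nlinarith
  have hderiv : deriv f (n * y) = 0 := by
    have hzero : f =ᶠ[𝓝 (n * y)] fun _ => 0 := by
      filter_upwards [lt_mem_nhds hRn] with v hv using hsupp v hv.le
    rw [hzero.deriv_eq, deriv_const]
  have hint : ∫ v in 0..(n * y), f v = ∫ v in 0..R, f v :=
    (integral_eq_integral_of_eq_zero_of_le hf.continuous hsupp hRn.le).symm
  have herr := abs_trapezoid_sum_sub_integral_le (fun t => (hf₁ t).hasDerivAt)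
    (fun t => (hf₂ t).hasDerivAt) (fun t => (hf''.differentiable one_ne_zero t).hasDerivAt) hy.le
    (n := n) fun t ht => hZ t ⟨ht.1, ht.2.trans hnR⟩
  rw [hderiv, hf0, hint, hsupp _ hRn.le, ← htsum] at herr
  calc _ ≤ n * (Z * y ^ 4 / 72) := by simpa using herr
    _ = n * y * (Z * y ^ 3 / 72) := by ring
    _ ≤ (R + 2) * (Z * y ^ 3 / 72) := by gcongr
    _ = (R + 2) * Z / 72 * y ^ 3 := by ring

end TrapezoidRule

section Weight

lemma wZero_eq_expNegInvGlue (x : ℝ) : wZero x = expNegInvGlue (1 - x ^ 2) := by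
  rcases lt_or_ge |x| 1 with hx | hx
  · have hx2 : x ^ 2 < 1 := (sq_lt_one_iff_abs_lt_one x).2 hx
    rw [wZero, expNegInvGlue, if_pos hx, if_neg (by linarith), one_div, neg_inv, neg_sub]
  · have hx2 : 1 ≤ x ^ 2 := (one_le_sq_iff_one_le_abs x).2 hx
    rw [wZero, expNegInvGlue, if_neg hx.not_gt, if_pos (by linarith)]

lemma contDiff_wZero {n : ℕ∞} : ContDiff ℝ n wZero := by
  rw [funext wZero_eq_expNegInvGlue]
  exact expNegInvGlue.contDiff.comp (by fun_prop)

lemma wZero_nonneg (x : ℝ) : 0 ≤ wZero x :=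
  wZero_eq_expNegInvGlue x ▸ expNegInvGlue.nonneg _

lemma wZero_of_one_le_abs {x : ℝ} (hx : 1 ≤ |x|) : wZero x = 0 := if_neg hx.not_gt

lemma hasCompactSupport_wZero : HasCompactSupport wZero :=
  HasCompactSupport.intro (isCompact_Icc (a := -1) (b := 1)) fun _ hx =>
    wZero_of_one_le_abs (not_lt.1 fun h => hx (abs_le.1 h.le))

lemma cZero_pos : 0 < cZero := by
  have hcont : Continuous wZero := contDiff_wZero.continuous (n := 0)
  refine (integral_pos_iff_support_of_nonneg wZero_nonneg
    (hcont.integrable_of_hasCompactSupport hasCompactSupport_wZero)).2 ?_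
  exact hcont.isOpen_support.measure_pos volume ⟨0, by simp [wZero]⟩

lemma contDiff_omegaFun {n : ℕ∞} : ContDiff ℝ n omegaFun :=
  contDiff_const.mul (contDiff_wZero.comp (by fun_prop))

lemma continuous_omegaFun : Continuous omegaFun := contDiff_omegaFun.continuous (n := 0)

lemma omegaFun_of_le_half {x : ℝ} (hx : x ≤ 1 / 2) : omegaFun x = 0 := by
  rw [omegaFun, wZero_of_one_le_abs (le_abs.2 (Or.inr (by linarith))), mul_zero]

lemma omegaFun_of_one_le {x : ℝ} (hx : 1 ≤ x) : omegaFun x = 0 := by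
  rw [omegaFun, wZero_of_one_le_abs (le_abs.2 (Or.inl (by linarith))), mul_zero]

lemma exists_abs_omegaFun_le : ∃ B : ℝ, 0 ≤ B ∧ ∀ x, |omegaFun x| ≤ B := by
  have hsupp : HasCompactSupport omegaFun :=
    HasCompactSupport.intro (isCompact_Icc (a := 0) (b := 1)) fun x hx => by
      rcases lt_or_ge x 0 with h | h
      · exact omegaFun_of_le_half (by linarith)
      · exact omegaFun_of_one_le (not_le.1 fun h1 => hx ⟨h, h1⟩).le
  obtain ⟨B, hB⟩ := continuous_omegaFun.bounded_above_of_compact_support hsupp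
  exact ⟨B, (norm_nonneg _).trans (hB 0), hB⟩

lemma integral_omegaFun : ∫ x, omegaFun x = 1 := by
  have hscale : ∫ x, wZero (4 * x - 3) = |(4 : ℝ)⁻¹| • ∫ x, wZero (x - 3) :=
    Measure.integral_comp_mul_left (fun x => wZero (x - 3)) 4
  have hc := cZero_pos.ne'
  simp only [omegaFun]
  rw [integral_const_mul, hscale, integral_sub_right_eq_self wZero, ← cZero,
    abs_of_pos (by norm_num), smul_eq_mul]
  field_simp

lemma integral_zero_omegaFun_of_one_le {u : ℝ} (hu : 1 ≤ u) : ∫ t in 0..u, omegaFun t = 1 := by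
  rw [intervalIntegral.integral_of_le (by linarith), ← integral_omegaFun]
  refine setIntegral_eq_integral_of_forall_compl_eq_zero fun x hx => ?_
  rcases le_or_gt x 0 with h | h
  · exact omegaFun_of_le_half (by linarith)
  · exact omegaFun_of_one_le (hu.trans (not_le.1 fun hxu => hx ⟨h, hxu⟩).le)

lemma integral_zero_eq_zero_of_le {f : ℝ → ℝ} {r u : ℝ} (hr : 0 ≤ r) (hf : ∀ t ≤ r, f t = 0)
    (hu : u ≤ r) : ∫ t in 0..u, f t = 0 := by
  rw [intervalIntegral.integral_congr (g := fun _ => 0) fun t ht =>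
    hf t (ht.2.trans (sup_le hr hu))]
  simp

lemma hasDerivAt_integral_omegaFun (u : ℝ) :
    HasDerivAt (fun u => ∫ t in 0..u, omegaFun t) (omegaFun u) u :=
  (continuous_omegaFun.integral_hasStrictDerivAt 0 u).hasDerivAt

/-- The function `ω(t) / t`, whose Riemann sums form the part of `h(x, y)` independent of `y`. -/
def omegaDivId (t : ℝ) : ℝ := omegaFun t / t

lemma omegaDivId_of_le_half {t : ℝ} (ht : t ≤ 1 / 2) : omegaDivId t = 0 := by
  rw [omegaDivId, omegaFun_of_le_half ht, zero_div]

lemma omegaDivId_of_one_le {t : ℝ} (ht : 1 ≤ t) : omegaDivId t = 0 := by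
  rw [omegaDivId, omegaFun_of_one_le ht, zero_div]

lemma omegaDivId_eventuallyEq_zero {t : ℝ} (ht : t < 1 / 2) : omegaDivId =ᶠ[𝓝 t] fun _ => 0 := by
  filter_upwards [gt_mem_nhds ht] with s hs using omegaDivId_of_le_half hs.le

lemma contDiff_omegaDivId {n : ℕ∞} : ContDiff ℝ n omegaDivId := by
  refine contDiff_iff_contDiffAt.2 fun t => ?_
  rcases lt_or_ge t (1 / 2) with ht | ht
  · exact contDiffAt_const.congr_of_eventuallyEq (omegaDivId_eventuallyEq_zero ht)
  · exact contDiff_omegaFun.contDiffAt.div contDiffAt_id (by linarith : t ≠ 0)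

/-- The mean `∫ ω(t) / t` of the reciprocal of a variable with density `ω`. -/
def kappa : ℝ := ∫ t in 0..1, omegaDivId t

/-- The density of the reciprocal of a variable with density `ω`. -/
def invOmegaDensity (v : ℝ) : ℝ := omegaFun v⁻¹ / v ^ 2

/-- The probability that the reciprocal of a variable with density `ω` exceeds `v`. -/
def invOmegaTail (v : ℝ) : ℝ := if v ≤ 0 then 1 else ∫ t in 0..v⁻¹, omegaFun t

lemma invOmegaDensity_of_le_one {v : ℝ} (hv : v ≤ 1) : invOmegaDensity v = 0 := by
  rcases le_or_gt v 0 with h0 | h0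
  · rw [invOmegaDensity, omegaFun_of_le_half (by linarith [inv_nonpos.2 h0]), zero_div]
  · rw [invOmegaDensity, omegaFun_of_one_le ((one_le_inv₀ h0).2 hv), zero_div]

lemma contDiff_invOmegaDensity {n : ℕ∞} : ContDiff ℝ n invOmegaDensity := by
  refine contDiff_iff_contDiffAt.2 fun v => ?_
  rcases lt_or_ge v 1 with hv | hv
  · refine contDiffAt_const.congr_of_eventuallyEq (f := fun _ => 0) ?_
    filter_upwards [gt_mem_nhds hv] with s hs using invOmegaDensity_of_le_one hs.le
  · have hv0 : v ≠ 0 := by linarith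
    exact (contDiff_omegaFun.contDiffAt.comp v (contDiffAt_inv ℝ hv0)).div (contDiffAt_id.pow 2)
      (pow_ne_zero 2 hv0)

lemma invOmegaTail_of_pos {v : ℝ} (hv : 0 < v) : invOmegaTail v = ∫ t in 0..v⁻¹, omegaFun t :=
  if_neg hv.not_ge

lemma invOmegaTail_of_le_one {v : ℝ} (hv : v ≤ 1) : invOmegaTail v = 1 := by
  rcases le_or_gt v 0 with h0 | h0
  · exact if_pos h0
  · rw [invOmegaTail_of_pos h0, integral_zero_omegaFun_of_one_le ((one_le_inv₀ h0).2 hv)]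

lemma invOmegaTail_of_two_le {v : ℝ} (hv : 2 ≤ v) : invOmegaTail v = 0 := by
  rw [invOmegaTail_of_pos (by linarith)]
  exact integral_zero_eq_zero_of_le (by norm_num) (fun _ => omegaFun_of_le_half)
    (by simpa using inv_anti₀ two_pos hv)

lemma hasDerivAt_invOmegaTail (v : ℝ) : HasDerivAt invOmegaTail (-invOmegaDensity v) v := by
  rcases lt_or_ge v 1 with hv | hv
  · rw [invOmegaDensity_of_le_one hv.le, neg_zero]
    refine (hasDerivAt_const v (1 : ℝ)).congr_of_eventuallyEq ?_
    filter_upwards [gt_mem_nhds hv] with s hs using invOmegaTail_of_le_one hs.le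
  · have hv0 : 0 < v := by linarith
    have hcomp := (hasDerivAt_integral_omegaFun v⁻¹).comp v (hasDerivAt_inv hv0.ne')
    refine (hcomp.congr_of_eventuallyEq ?_).congr_deriv (by simp [invOmegaDensity, div_eq_mul_inv])
    filter_upwards [lt_mem_nhds hv0] with s hs using invOmegaTail_of_pos hs

lemma contDiff_invOmegaTail : ContDiff ℝ 3 invOmegaTail := by
  refine (contDiff_succ_iff_deriv (n := 2)).2
    ⟨fun v => (hasDerivAt_invOmegaTail v).differentiableAt, by simp, ?_⟩
  rw [funext fun v => (hasDerivAt_invOmegaTail v).deriv]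
  exact (contDiff_invOmegaDensity (n := 2)).neg

lemma integral_invOmegaTail : ∫ v in 0..2, invOmegaTail v = kappa := by
  have hint (a b : ℝ) : IntervalIntegrable invOmegaTail volume a b :=
    contDiff_invOmegaTail.continuous.intervalIntegrable a b
  set P : ℝ → ℝ := fun u => ∫ t in 0..u, omegaDivId t with hP
  have hP' (u : ℝ) : HasDerivAt P (omegaDivId u) u :=
    ((contDiff_omegaDivId (n := 0)).continuous.integral_hasStrictDerivAt 0 u).hasDerivAt
  have hP_half : P (1 / 2) = 0 :=
    integral_zero_eq_zero_of_le (by norm_num) (fun _ => omegaDivId_of_le_half) le_rfl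
  have h01 : ∫ v in 0..1, invOmegaTail v = 1 := by
    rw [intervalIntegral.integral_congr (g := fun _ => 1) fun t ht =>
      invOmegaTail_of_le_one (uIcc_of_le (zero_le_one (α := ℝ)) ▸ ht).2]
    simp
  have h12 : ∫ v in 1..2, invOmegaTail v =
      (2 * invOmegaTail 2 - P 2⁻¹) - (1 * invOmegaTail 1 - P 1⁻¹) := by
    refine intervalIntegral.integral_eq_sub_of_hasDerivAt
      (f := fun v => v * invOmegaTail v - P v⁻¹) (fun v hv => ?_) (hint _ _)
    have hv0 : v ≠ 0 := by linarith [(uIcc_of_le (one_le_two (α := ℝ)) ▸ hv).1]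
    refine (((hasDerivAt_id' v).mul (hasDerivAt_invOmegaTail v)).sub
      ((hP' v⁻¹).comp v (hasDerivAt_inv hv0))).congr_deriv ?_
    simp only [invOmegaDensity, omegaDivId]
    field_simp
    ring
  rw [← intervalIntegral.integral_add_adjacent_intervals (hint 0 1) (hint 1 2), h01, h12,
    invOmegaTail_of_two_le le_rfl, invOmegaTail_of_le_one le_rfl, ← one_div, hP_half, inv_one, hP,
    kappa]
  ring

end Weight

section Kernel

/-- The profile `k` in the decomposition `h(x, y) = c(x) + x⁻¹ k(y / x)`: an approximation of the
Dirac mass at `0`. -/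
def hProfile (s : ℝ) : ℝ := kappa - ∑' j : ℕ, 1 / ((j : ℝ) + 1) * omegaFun (|s| / (j + 1))

/-- The part `c(x)` of `h(x, y) = c(x) + x⁻¹ k(y / x)` that does not depend on `y`. -/
def hConst (x : ℝ) : ℝ := ∑' j : ℕ, omegaDivId (x * (j + 1)) - kappa / x

/-- The odd primitive of `hProfile`. -/
def hProfilePrimitive (s : ℝ) : ℝ := ∫ t in 0..s, hProfile t

lemma omegaFun_abs_div_eq_zero {s : ℝ} {n j : ℕ} (hs : 2 * |s| ≤ n + 1) (hj : n ≤ j) :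
    omegaFun (|s| / (j + 1)) = 0 := by
  have hnj : (n : ℝ) ≤ j := by exact_mod_cast hj
  refine omegaFun_of_le_half ?_
  rw [div_le_iff₀ (by positivity)]
  linarith

lemma hProfile_eq_sub_sum {s : ℝ} {n : ℕ} (hs : 2 * |s| ≤ n + 1) :
    hProfile s = kappa - ∑ j ∈ Finset.range n, 1 / ((j : ℝ) + 1) * omegaFun (|s| / (j + 1)) := by
  rw [hProfile, tsum_eq_sum fun j hj => ?_]
  rw [omegaFun_abs_div_eq_zero hs (not_lt.1 (Finset.mem_range.not.1 hj)), mul_zero]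

lemma hFun_eq_hConst_add_hProfile {x : ℝ} (hx : 0 < x) (y : ℝ) :
    hFun x y = hConst x + x⁻¹ * hProfile (y / x) := by
  have hfirst (j : ℕ) : 1 / (x * ((j : ℝ) + 1)) * omegaFun (x * (j + 1)) =
      omegaDivId (x * (j + 1)) := by rw [omegaDivId]; ring
  have hsecond (j : ℕ) : 1 / (x * ((j : ℝ) + 1)) * omegaFun (|y| / (x * (j + 1))) =
      x⁻¹ * (1 / ((j : ℝ) + 1) * omegaFun (|y / x| / (j + 1))) := by
    rw [abs_div, abs_of_pos hx, div_div]
    field_simp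
  have hsum₁ : Summable fun j : ℕ => omegaDivId (x * (j + 1)) := by
    refine summable_of_ne_finset_zero (s := Finset.range ⌈x⁻¹⌉₊) fun j hj => ?_
    have hj' : x⁻¹ ≤ j := Nat.ceil_le.1 (not_lt.1 (Finset.mem_range.not.1 hj))
    refine omegaDivId_of_one_le ?_
    calc 1 = x * x⁻¹ := (mul_inv_cancel₀ hx.ne').symm
      _ ≤ x * (j + 1) := by gcongr; linarith
  have hsum₂ : Summable fun j : ℕ => 1 / ((j : ℝ) + 1) * omegaFun (|y / x| / (j + 1)) := by
    refine summable_of_ne_finset_zero (s := Finset.range ⌊2 * |y / x|⌋₊) fun j hj => ?_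
    rw [omegaFun_abs_div_eq_zero (Nat.lt_floor_add_one _).le
      (not_lt.1 (Finset.mem_range.not.1 hj)), mul_zero]
  simp only [hFun, hConst, hProfile, mul_sub, hfirst, hsecond]
  rw [hsum₁.tsum_sub (hsum₂.mul_left _), tsum_mul_left]
  ring

lemma hProfile_neg (s : ℝ) : hProfile (-s) = hProfile s := by simp only [hProfile, abs_neg]

lemma continuous_hProfile : Continuous hProfile := by
  refine continuous_iff_continuousAt.2 fun s => ?_
  obtain ⟨n, hn⟩ := exists_nat_gt (2 * |s|)
  have hnear : ∀ᶠ t : ℝ in 𝓝 s, 2 * |t| < n :=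
    (continuous_const.mul continuous_abs).continuousAt.eventually_lt continuousAt_const hn
  have hsum : hProfile =ᶠ[𝓝 s] fun t =>
      kappa - ∑ j ∈ Finset.range n, 1 / ((j : ℝ) + 1) * omegaFun (|t| / (j + 1)) := by
    filter_upwards [hnear] with t ht using hProfile_eq_sub_sum (by linarith)
  have := continuous_omegaFun
  exact ContinuousAt.congr (by fun_prop) hsum.symm

lemma exists_abs_hProfile_le : ∃ B : ℝ, 0 ≤ B ∧ ∀ s, |hProfile s| ≤ B := by
  obtain ⟨B, hB0, hB⟩ := exists_abs_omegaFun_le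
  have hterm (s : ℝ) (j : ℕ) : |1 / ((j : ℝ) + 1) * omegaFun (|s| / (j + 1))| ≤ B / |s| := by
    rcases eq_or_ne s 0 with rfl | hs
    · simp [omegaFun_of_le_half]
    have hs' : 0 < |s| := abs_pos.2 hs
    rcases le_or_gt 1 (|s| / ((j : ℝ) + 1)) with h | h
    · rw [omegaFun_of_one_le h, mul_zero, abs_zero]; positivity
    · rw [div_lt_one (by positivity)] at h
      rw [abs_mul, abs_of_pos (by positivity), one_div_mul_eq_div]
      exact div_le_div₀ hB0 (hB _) hs' h.le
  refine ⟨|kappa| + 2 * B, by positivity, fun s => ?_⟩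
  have hfloor : (⌊2 * |s|⌋₊ : ℝ) ≤ 2 * |s| := Nat.floor_le (by positivity)
  rw [hProfile_eq_sub_sum (Nat.lt_floor_add_one (2 * |s|)).le]
  refine (abs_sub _ _).trans (add_le_add_right ?_ _)
  calc _ ≤ ∑ j ∈ Finset.range ⌊2 * |s|⌋₊, |1 / ((j : ℝ) + 1) * omegaFun (|s| / (j + 1))| :=
        Finset.abs_sum_le_sum_abs _ _
    _ ≤ ⌊2 * |s|⌋₊ * (B / |s|) := by
        simpa using Finset.sum_le_card_nsmul (Finset.range ⌊2 * |s|⌋₊) _ _ fun j _ => hterm s j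
    _ ≤ 2 * |s| * (B / |s|) := by gcongr
    _ = 2 * B * (|s| / |s|) := by ring
    _ ≤ 2 * B := mul_le_of_le_one_right (by positivity) (div_self_le_one _)

lemma hasDerivAt_hProfilePrimitive (s : ℝ) : HasDerivAt hProfilePrimitive (hProfile s) s :=
  (continuous_hProfile.integral_hasStrictDerivAt 0 s).hasDerivAt

lemma hProfilePrimitive_neg (s : ℝ) : hProfilePrimitive (-s) = -hProfilePrimitive s := by
  have h := intervalIntegral.integral_comp_neg (a := 0) (b := s) hProfile
  simp only [hProfile_neg, neg_zero] at h
  rw [hProfilePrimitive, hProfilePrimitive, h, intervalIntegral.integral_symm]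

lemma integral_sub_sum_omegaFun (c s : ℝ) (n : ℕ) :
    ∫ t in 0..s, (c - ∑ j ∈ Finset.range n, 1 / ((j : ℝ) + 1) * omegaFun (t / (j + 1))) =
      c * s - ∑ j ∈ Finset.range n, ∫ v in 0..(s / (j + 1)), omegaFun v := by
  have hcont (j : ℕ) : Continuous fun t => 1 / ((j : ℝ) + 1) * omegaFun (t / (j + 1)) := by
    have := continuous_omegaFun
    fun_prop
  rw [intervalIntegral.integral_sub intervalIntegrable_const
      ((continuous_finsetSum _ fun j _ => hcont j).intervalIntegrable _ _),
    intervalIntegral.integral_finsetSum fun j _ => (hcont j).intervalIntegrable _ _]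
  simp only [intervalIntegral.integral_const_mul, one_div,
    intervalIntegral.inv_mul_integral_comp_div, zero_div]
  simp [mul_comm]

lemma hProfilePrimitive_eq_sub_tsum {s : ℝ} (hs : 0 < s) :
    hProfilePrimitive s = kappa * s - ∑' j : ℕ, invOmegaTail (s⁻¹ * (j + 1)) := by
  obtain ⟨n, hn⟩ := exists_nat_ge (2 * s)
  have htsum : ∑' j : ℕ, invOmegaTail (s⁻¹ * (j + 1)) =
      ∑ j ∈ Finset.range n, invOmegaTail (s⁻¹ * (j + 1)) := by
    refine tsum_eq_sum fun j hj => invOmegaTail_of_two_le ?_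
    have hnj : (n : ℝ) ≤ j := by exact_mod_cast not_lt.1 (Finset.mem_range.not.1 hj)
    rw [← div_eq_inv_mul, le_div_iff₀ hs]
    linarith
  have hint : hProfilePrimitive s = ∫ t in 0..s,
      (kappa - ∑ j ∈ Finset.range n, 1 / ((j : ℝ) + 1) * omegaFun (t / (j + 1))) := by
    refine intervalIntegral.integral_congr fun t ht => ?_
    rw [uIcc_of_le hs.le] at ht
    rw [hProfile_eq_sub_sum (n := n) (by rw [abs_of_nonneg ht.1]; linarith [ht.2]),
      abs_of_nonneg ht.1]
  rw [htsum, hint, integral_sub_sum_omegaFun]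
  congr 1
  refine Finset.sum_congr rfl fun j _ => ?_
  rw [invOmegaTail_of_pos (by positivity), mul_inv, inv_inv, div_eq_mul_inv]

lemma exists_abs_hProfilePrimitive_sub_half_le :
    ∃ C : ℝ, 0 ≤ C ∧ ∀ s, 1 ≤ s → |hProfilePrimitive s - 1 / 2| ≤ C / s ^ 2 := by
  obtain ⟨C, hC0, hC⟩ := exists_abs_trapezoid_tsum_sub_integral_le contDiff_invOmegaTail zero_le_two
    (fun _ => invOmegaTail_of_two_le) (by
      rw [(hasDerivAt_invOmegaTail 0).deriv, invOmegaDensity_of_le_one zero_le_one, neg_zero])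
  refine ⟨C, hC0, fun s hs => ?_⟩
  have hs0 : 0 < s := by linarith
  have htrap := hC s⁻¹ (inv_pos.2 hs0) (inv_le_one_of_one_le₀ hs)
  rw [integral_invOmegaTail, invOmegaTail_of_le_one zero_le_one] at htrap
  rw [hProfilePrimitive_eq_sub_tsum hs0, abs_sub_comm]
  set T := ∑' j : ℕ, invOmegaTail (s⁻¹ * (j + 1))
  calc |1 / 2 - (kappa * s - T)| = |s * (s⁻¹ * (1 / 2 + T) - kappa)| := by
        congr 1; field_simp; ring
    _ = s * |s⁻¹ * (1 / 2 + T) - kappa| := by rw [abs_mul, abs_of_pos hs0]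
    _ ≤ s * (C * s⁻¹ ^ 3) := by gcongr
    _ = C / s ^ 2 := by field_simp

lemma exists_abs_hProfilePrimitive_sub_sign_le :
    ∃ C : ℝ, 0 ≤ C ∧ ∀ s, |hProfilePrimitive s - Real.sign s / 2| ≤ C / (1 + s ^ 2) := by
  obtain ⟨B, hB0, hB⟩ := exists_abs_hProfile_le
  obtain ⟨C, hC0, hC⟩ := exists_abs_hProfilePrimitive_sub_half_le
  set C' := 2 * B + 1 + 2 * C
  have hpos {s : ℝ} (hs : 0 < s) : |hProfilePrimitive s - 1 / 2| ≤ C' / (1 + s ^ 2) := by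
    rcases le_or_gt s 1 with h1 | h1
    · have hK : ‖∫ t in 0..s, hProfile t‖ ≤ B * |s - 0| :=
        intervalIntegral.norm_integral_le_of_norm_le_const fun t _ => hB t
      rw [sub_zero, abs_of_pos hs, Real.norm_eq_abs, ← hProfilePrimitive] at hK
      have hK' : |hProfilePrimitive s - 1 / 2| ≤ B + 1 / 2 :=
        calc _ ≤ |hProfilePrimitive s| + |1 / 2| := abs_sub _ _
          _ ≤ B * 1 + 1 / 2 := by
            rw [abs_of_pos (half_pos one_pos : (0 : ℝ) < 1 / 2)]; gcongr; exact hK.trans (by gcongr)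
          _ = B + 1 / 2 := by ring
      rw [le_div_iff₀ (by positivity)]
      calc _ ≤ (B + 1 / 2) * (1 + 1 ^ 2) := by gcongr
        _ ≤ C' := by simp only [C']; linarith
    · calc _ ≤ C / s ^ 2 := hC s h1.le
        _ = 2 * C / (s ^ 2 + s ^ 2) := by field_simp; ring
        _ ≤ C' / (1 + s ^ 2) := by
          gcongr
          · simp only [C']; linarith
          · nlinarith
  refine ⟨C', by positivity, fun s => ?_⟩
  rcases lt_trichotomy s 0 with hs | rfl | hs
  · have hneg := hpos (neg_pos.2 hs)
    rw [hProfilePrimitive_neg, neg_sq] at hneg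
    rw [Real.sign_of_neg hs, ← abs_neg]
    exact (congrArg abs (by ring)).trans_le hneg
  · simpa [hProfilePrimitive] using (by positivity : 0 ≤ C')
  · rw [Real.sign_of_pos hs]; exact hpos hs

lemma exists_abs_hConst_le : ∃ C : ℝ, 0 ≤ C ∧ ∀ x, 0 < x → |hConst x| ≤ C * x := by
  obtain ⟨C, hC0, hC⟩ := exists_abs_trapezoid_tsum_sub_integral_le contDiff_omegaDivId zero_le_one
    (fun _ => omegaDivId_of_one_le)
    (by rw [(omegaDivId_eventuallyEq_zero (by norm_num)).deriv_eq, deriv_const])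
  refine ⟨C + |kappa|, by positivity, fun x hx => ?_⟩
  rcases le_or_gt x 1 with hx1 | hx1
  · have htrap := hC x hx hx1
    rw [omegaDivId_of_le_half (by norm_num), ← kappa, zero_div, zero_add] at htrap
    have hscale : |hConst x| * x = |x * ∑' j : ℕ, omegaDivId (x * (j + 1)) - kappa| := by
      rw [hConst, ← abs_of_pos hx, ← abs_mul, abs_of_pos hx]
      congr 1
      field_simp
    refine le_of_mul_le_mul_right ?_ hx
    calc |hConst x| * x ≤ C * x ^ 3 := hscale.trans_le htrap
      _ ≤ C * x ^ 2 := by gcongr C * ?_; exact pow_le_pow_of_le_one hx.le hx1 (by norm_num)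
      _ ≤ (C + |kappa|) * x * x := by nlinarith [mul_nonneg (abs_nonneg kappa) (sq_nonneg x)]
  · have hzero (j : ℕ) : omegaDivId (x * (j + 1)) = 0 :=
      omegaDivId_of_one_le (by nlinarith [(Nat.cast_nonneg j : (0 : ℝ) ≤ j)])
    simp only [hConst, hzero, tsum_zero, zero_sub, abs_neg, abs_div, abs_of_pos hx]
    calc |kappa| / x ≤ |kappa| := div_le_self (abs_nonneg _) hx1.le
      _ ≤ (C + |kappa|) * x := by nlinarith [mul_nonneg hC0 hx.le, abs_nonneg kappa]

end Kernel

section Geometry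

open scoped Matrix Matrix.Norms.Operator

variable {d : ℕ} {A : Matrix (Fin d) (Fin d) ℝ}

lemma norm_sq_le_dotProduct_self (v : Fin d → ℝ) : ‖v‖ ^ 2 ≤ v ⬝ᵥ v := by
  refine (Real.le_sqrt (norm_nonneg v) (Finset.sum_nonneg fun i _ => mul_self_nonneg _)).1 ?_
  refine (pi_norm_le_iff_of_nonneg (Real.sqrt_nonneg _)).2 fun i => Real.le_sqrt_of_sq_le ?_
  rw [Real.norm_eq_abs, sq_abs, sq]
  exact Finset.single_le_sum (f := fun i => v i * v i) (fun i _ => mul_self_nonneg _)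
    (Finset.mem_univ i)

lemma abs_dotProduct_le (u v : Fin d → ℝ) : |u ⬝ᵥ v| ≤ d * (‖u‖ * ‖v‖) := by
  refine (Finset.abs_sum_le_sum_abs _ _).trans
    ((Finset.sum_le_card_nsmul _ _ (‖u‖ * ‖v‖) fun i _ => ?_).trans_eq (by simp))
  rw [abs_mul]
  exact mul_le_mul (norm_le_pi_norm u i) (norm_le_pi_norm v i) (abs_nonneg _) (norm_nonneg _)

/-- The squared Euclidean length `|∇F|²` of the gradient of `F = FqR A`. -/
def gradSq (A : Matrix (Fin d) (Fin d) ℝ) (z : Fin d → ℝ) : ℝ := (A *ᵥ z) ⬝ᵥ (A *ᵥ z)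

lemma gradSq_nonneg (A : Matrix (Fin d) (Fin d) ℝ) (z : Fin d → ℝ) : 0 ≤ gradSq A z :=
  (sq_nonneg _).trans (norm_sq_le_dotProduct_self _)

lemma gradSq_le (A : Matrix (Fin d) (Fin d) ℝ) (z : Fin d → ℝ) :
    gradSq A z ≤ d * ‖A‖ ^ 2 * ‖z‖ ^ 2 := by
  have hAz := Matrix.linfty_opNorm_mulVec A z
  calc gradSq A z ≤ d * (‖A *ᵥ z‖ * ‖A *ᵥ z‖) := (le_abs_self _).trans (abs_dotProduct_le _ _)
    _ ≤ d * (‖A‖ * ‖z‖ * (‖A‖ * ‖z‖)) := by gcongr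
    _ = d * ‖A‖ ^ 2 * ‖z‖ ^ 2 := by ring

lemma exists_mul_norm_sq_le_gradSq (hA : A.det ≠ 0) :
    ∃ c : ℝ, 0 < c ∧ ∀ z, c * ‖z‖ ^ 2 ≤ gradSq A z := by
  refine ⟨(‖A⁻¹‖ ^ 2 + 1)⁻¹, by positivity, fun z => ?_⟩
  have hz : ‖z‖ ≤ ‖A⁻¹‖ * ‖A *ᵥ z‖ := by
    simpa [Matrix.mulVec_mulVec, Matrix.nonsing_inv_mul A (isUnit_iff_ne_zero.2 hA)] using
      Matrix.linfty_opNorm_mulVec A⁻¹ (A *ᵥ z)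
  rw [inv_mul_le_iff₀ (by positivity)]
  calc ‖z‖ ^ 2 ≤ (‖A⁻¹‖ * ‖A *ᵥ z‖) ^ 2 := by gcongr
    _ = ‖A⁻¹‖ ^ 2 * ‖A *ᵥ z‖ ^ 2 := mul_pow _ _ _
    _ ≤ (‖A⁻¹‖ ^ 2 + 1) * gradSq A z := by
        gcongr
        · linarith
        · exact norm_sq_le_dotProduct_self _

lemma hasFDerivAt_mulVec_apply (A : Matrix (Fin d) (Fin d) ℝ) (i : Fin d) (z : Fin d → ℝ) :
    HasFDerivAt (fun z => (A *ᵥ z) i)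
      ((ContinuousLinearMap.proj i).comp A.mulVecLin.toContinuousLinearMap) z :=
  ((ContinuousLinearMap.proj i).comp A.mulVecLin.toContinuousLinearMap).hasFDerivAt

lemma contDiff_mulVec_apply (A : Matrix (Fin d) (Fin d) ℝ) (i : Fin d) :
    ContDiff ℝ 1 fun z => (A *ᵥ z) i :=
  ((ContinuousLinearMap.proj i).comp A.mulVecLin.toContinuousLinearMap).contDiff

lemma contDiff_gradSq (A : Matrix (Fin d) (Fin d) ℝ) : ContDiff ℝ 1 (gradSq A) :=
  ContDiff.sum (s := Finset.univ) fun i _ =>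
    (contDiff_mulVec_apply A i).mul (contDiff_mulVec_apply A i)

lemma fderiv_gradSq_apply (A : Matrix (Fin d) (Fin d) ℝ) (z v : Fin d → ℝ) :
    fderiv ℝ (gradSq A) z v = 2 * ((A *ᵥ z) ⬝ᵥ (A *ᵥ v)) := by
  have h : HasFDerivAt (gradSq A) _ z := HasFDerivAt.fun_sum fun i (_ : i ∈ Finset.univ) =>
    (hasFDerivAt_mulVec_apply A i z).mul (hasFDerivAt_mulVec_apply A i z)
  rw [h.fderiv]
  simp [dotProduct, Finset.mul_sum, two_mul]

lemma FqR_eq_half_dotProduct (A : Matrix (Fin d) (Fin d) ℝ) (z : Fin d → ℝ) :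
    FqR A z = 1 / 2 * (z ⬝ᵥ (A *ᵥ z)) := by
  simp only [FqR, dotProduct, Matrix.mulVec, Finset.mul_sum]
  congr! 3
  ring

lemma contDiff_FqR (A : Matrix (Fin d) (Fin d) ℝ) : ContDiff ℝ 1 (FqR A) := by
  unfold FqR
  fun_prop

lemma fderiv_FqR_apply (hA : A.IsSymm) (z v : Fin d → ℝ) :
    fderiv ℝ (FqR A) z v = (A *ᵥ z) ⬝ᵥ v := by
  have h : HasFDerivAt (fun z => 1 / 2 * (z ⬝ᵥ (A *ᵥ z))) _ z :=
    (HasFDerivAt.fun_sum fun i (_ : i ∈ Finset.univ) =>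
      (hasFDerivAt_apply i z).mul (hasFDerivAt_mulVec_apply A i z)).const_mul (1 / 2)
  have hsymm : z ⬝ᵥ (A *ᵥ v) = (A *ᵥ z) ⬝ᵥ v := by
    rw [Matrix.dotProduct_mulVec, ← Matrix.mulVec_transpose, hA.eq]
  rw [funext (FqR_eq_half_dotProduct A), h.fderiv]
  have hsum : ∑ i, (z i * (A *ᵥ v) i + (A *ᵥ z) i * v i) = 2 * ((A *ᵥ z) ⬝ᵥ v) := by
    rw [Finset.sum_add_distrib, two_mul]
    exact congrArg (· + _) hsymm
  simp [hsum]

end Geometry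

section GradientFlow

open scoped Matrix Matrix.Norms.Operator

variable {d : ℕ} {A : Matrix (Fin d) (Fin d) ℝ} {w : (Fin d → ℝ) → ℝ} {z : Fin d → ℝ} {δ : ℝ}

/-- The vector field `∇F / (|∇F|² + δ)` for `F = FqR A`. At `δ = 0` it moves `F` at unit speed;
a positive `δ` removes the singularity at the origin. -/
def flowField (A : Matrix (Fin d) (Fin d) ℝ) (δ : ℝ) (z : Fin d → ℝ) : Fin d → ℝ :=
  (gradSq A z + δ)⁻¹ • (A *ᵥ z)

/-- The divergence of the vector field `w • flowField A δ`. -/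
def flowDiv (A : Matrix (Fin d) (Fin d) ℝ) (δ : ℝ) (w : (Fin d → ℝ) → ℝ) (z : Fin d → ℝ) : ℝ :=
  ∑ i, fderiv ℝ (fun z => w z * flowField A δ z i) z (Pi.single i 1)

/-- The natural size of `flowDiv A δ w`, uniformly in `δ`. -/
def flowMajorant (w : (Fin d → ℝ) → ℝ) (z : Fin d → ℝ) : ℝ :=
  ‖fderiv ℝ w z‖ / ‖z‖ + |w z| / ‖z‖ ^ 2

lemma flowMajorant_nonneg (w : (Fin d → ℝ) → ℝ) (z : Fin d → ℝ) : 0 ≤ flowMajorant w z := by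
  unfold flowMajorant
  positivity

/-- The functions against which the divergence theorem for `flowField A 0` holds. -/
structure IsFlowAdmissible (w : (Fin d → ℝ) → ℝ) : Prop where
  contDiff : ContDiff ℝ 1 w
  integrable : Integrable w
  integrable_flowMajorant : Integrable (flowMajorant w)

lemma gradSq_add_pos (hδ : 0 < δ) (z : Fin d → ℝ) : 0 < gradSq A z + δ :=
  add_pos_of_nonneg_of_pos (gradSq_nonneg A z) hδ

lemma gradSq_pos (hA : A.det ≠ 0) (hz : z ≠ 0) : 0 < gradSq A z := by
  obtain ⟨c, hc, hG⟩ := exists_mul_norm_sq_le_gradSq hA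
  have := norm_pos_iff.2 hz
  exact (by positivity : 0 < c * ‖z‖ ^ 2).trans_le (hG z)

lemma hasFDerivAt_flowField_apply (hG : gradSq A z + δ ≠ 0) (i : Fin d) :
    HasFDerivAt (fun z => flowField A δ z i)
      ((gradSq A z + δ)⁻¹ • (ContinuousLinearMap.proj i).comp A.mulVecLin.toContinuousLinearMap
        + (A *ᵥ z) i • (-((gradSq A z + δ) ^ 2)⁻¹ • fderiv ℝ (gradSq A) z)) z := by
  have hgrad := ((contDiff_gradSq A).differentiable one_ne_zero z).hasFDerivAt.add_const δ
  exact ((hasDerivAt_inv hG).comp_hasFDerivAt z hgrad).mul (hasFDerivAt_mulVec_apply A i z)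

lemma fderiv_mul_flowField_apply (hw : DifferentiableAt ℝ w z) (hG : gradSq A z + δ ≠ 0)
    (i : Fin d) (v : Fin d → ℝ) :
    fderiv ℝ (fun z => w z * flowField A δ z i) z v =
      fderiv ℝ w z v * flowField A δ z i + w z * ((gradSq A z + δ)⁻¹ * (A *ᵥ v) i
        - 2 * ((gradSq A z + δ) ^ 2)⁻¹ * (A *ᵥ z) i * ((A *ᵥ z) ⬝ᵥ (A *ᵥ v))) := by
  rw [(hw.hasFDerivAt.fun_mul (hasFDerivAt_flowField_apply hG i)).fderiv]
  simp only [smul_add, add_apply, smul_apply, ContinuousLinearMap.comp_apply,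
    LinearMap.coe_toContinuousLinearMap', Matrix.mulVecBilin_apply, ContinuousLinearMap.proj_apply,
    smul_eq_mul, fderiv_gradSq_apply]
  ring

lemma contDiff_flowField_apply (hδ : 0 < δ) (i : Fin d) :
    ContDiff ℝ 1 fun z => flowField A δ z i :=
  (((contDiff_gradSq A).add contDiff_const).inv fun z => (gradSq_add_pos hδ z).ne').mul
    (contDiff_mulVec_apply A i)

lemma exists_abs_flowField_apply_le (hA : A.det ≠ 0) :
    ∃ C : ℝ, 0 ≤ C ∧ ∀ δ, 0 ≤ δ → ∀ z, z ≠ 0 → ∀ i, |flowField A δ z i| ≤ C / ‖z‖ := by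
  obtain ⟨c, hc, hG⟩ := exists_mul_norm_sq_le_gradSq hA
  refine ⟨‖A‖ / c, by positivity, fun δ hδ z hz i => ?_⟩
  have := norm_pos_iff.2 hz
  have hGδ : c * ‖z‖ ^ 2 ≤ gradSq A z + δ := (hG z).trans (le_add_of_nonneg_right hδ)
  calc |flowField A δ z i| = (gradSq A z + δ)⁻¹ * |(A *ᵥ z) i| := by
        rw [flowField, Pi.smul_apply, smul_eq_mul, abs_mul,
          abs_of_nonneg (inv_nonneg.2 (add_nonneg (gradSq_nonneg A z) hδ))]
    _ ≤ (c * ‖z‖ ^ 2)⁻¹ * (‖A‖ * ‖z‖) := by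
        gcongr
        exact (norm_le_pi_norm (A *ᵥ z) i).trans (Matrix.linfty_opNorm_mulVec A z)
    _ = ‖A‖ / c / ‖z‖ := by field_simp

lemma exists_abs_flowField_deriv_le (hA : A.det ≠ 0) :
    ∃ C : ℝ, 0 ≤ C ∧ ∀ δ, 0 ≤ δ → ∀ z, z ≠ 0 → ∀ i, ∀ v : Fin d → ℝ, ‖v‖ ≤ 1 →
      |(gradSq A z + δ)⁻¹ * (A *ᵥ v) i
        - 2 * ((gradSq A z + δ) ^ 2)⁻¹ * (A *ᵥ z) i * ((A *ᵥ z) ⬝ᵥ (A *ᵥ v))| ≤ C / ‖z‖ ^ 2 := by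
  obtain ⟨c, hc, hG⟩ := exists_mul_norm_sq_le_gradSq hA
  refine ⟨‖A‖ / c + 2 * d * ‖A‖ ^ 3 / c ^ 2, by positivity, fun δ hδ z hz i v hv => ?_⟩
  have := norm_pos_iff.2 hz
  have hGδ : c * ‖z‖ ^ 2 ≤ gradSq A z + δ := (hG z).trans (le_add_of_nonneg_right hδ)
  have hGδ0 : 0 < gradSq A z + δ := lt_of_lt_of_le (by positivity) hGδ
  have hAz := Matrix.linfty_opNorm_mulVec A z
  have hAv : ‖A *ᵥ v‖ ≤ ‖A‖ :=
    (Matrix.linfty_opNorm_mulVec A v).trans (mul_le_of_le_one_right (norm_nonneg A) hv)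
  have hdot : |(A *ᵥ z) ⬝ᵥ (A *ᵥ v)| ≤ d * (‖A‖ * ‖z‖ * ‖A‖) :=
    (abs_dotProduct_le _ _).trans (by gcongr)
  calc _ ≤ (gradSq A z + δ)⁻¹ * |(A *ᵥ v) i|
        + 2 * ((gradSq A z + δ) ^ 2)⁻¹ * |(A *ᵥ z) i| * |(A *ᵥ z) ⬝ᵥ (A *ᵥ v)| := by
        refine (abs_sub _ _).trans_eq ?_
        simp only [abs_mul, abs_inv, abs_pow, abs_of_pos hGδ0, abs_two]
    _ ≤ (c * ‖z‖ ^ 2)⁻¹ * ‖A‖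
        + 2 * ((c * ‖z‖ ^ 2) ^ 2)⁻¹ * (‖A‖ * ‖z‖) * (d * (‖A‖ * ‖z‖ * ‖A‖)) := by
        gcongr
        · exact (norm_le_pi_norm (A *ᵥ v) i).trans hAv
        · exact (norm_le_pi_norm (A *ᵥ z) i).trans hAz
    _ = (‖A‖ / c + 2 * d * ‖A‖ ^ 3 / c ^ 2) / ‖z‖ ^ 2 := by field_simp

lemma exists_abs_fderiv_mul_flowField_le (hA : A.det ≠ 0) :
    ∃ C : ℝ, 0 ≤ C ∧ ∀ δ, 0 ≤ δ → ∀ z, z ≠ 0 → ∀ i, ∀ w : (Fin d → ℝ) → ℝ,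
      DifferentiableAt ℝ w z →
        |fderiv ℝ (fun z => w z * flowField A δ z i) z (Pi.single i 1)| ≤ C * flowMajorant w z := by
  obtain ⟨C₀, hC₀, hfield⟩ := exists_abs_flowField_apply_le hA
  obtain ⟨C₁, hC₁, hderiv⟩ := exists_abs_flowField_deriv_le hA
  refine ⟨C₀ + C₁, by positivity, fun δ hδ z hz i w hw => ?_⟩
  have hsingle : ‖(Pi.single i 1 : Fin d → ℝ)‖ ≤ 1 :=
    (Pi.norm_single (G := fun _ => ℝ) (1 : ℝ)).trans_le norm_one.le
  have hdw : |fderiv ℝ w z (Pi.single i 1)| ≤ ‖fderiv ℝ w z‖ :=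
    (fderiv ℝ w z).unit_le_opNorm _ hsingle
  rw [fderiv_mul_flowField_apply hw (by linarith [gradSq_pos hA hz] : _ < _).ne']
  refine (abs_add_le _ _).trans ?_
  rw [abs_mul, abs_mul]
  calc _ ≤ ‖fderiv ℝ w z‖ * (C₀ / ‖z‖) + |w z| * (C₁ / ‖z‖ ^ 2) := by
        gcongr
        · exact hfield δ hδ z hz i
        · exact hderiv δ hδ z hz i _ hsingle
    _ = C₀ * (‖fderiv ℝ w z‖ / ‖z‖) + C₁ * (|w z| / ‖z‖ ^ 2) := by ring
    _ ≤ (C₀ + C₁) * (‖fderiv ℝ w z‖ / ‖z‖) + (C₀ + C₁) * (|w z| / ‖z‖ ^ 2) := by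
        gcongr <;> linarith
    _ = (C₀ + C₁) * flowMajorant w z := (mul_add _ _ _).symm

lemma exists_abs_flowDiv_le (hA : A.det ≠ 0) :
    ∃ C : ℝ, 0 ≤ C ∧ ∀ δ, 0 ≤ δ → ∀ z, z ≠ 0 → ∀ w : (Fin d → ℝ) → ℝ,
      DifferentiableAt ℝ w z → |flowDiv A δ w z| ≤ C * flowMajorant w z := by
  obtain ⟨C, hC, hterm⟩ := exists_abs_fderiv_mul_flowField_le hA
  refine ⟨d * C, by positivity, fun δ hδ z hz w hw => ?_⟩
  refine (Finset.abs_sum_le_sum_abs _ _).trans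
    ((Finset.sum_le_card_nsmul _ _ _ fun i _ => hterm δ hδ z hz i w hw).trans_eq ?_)
  simp [mul_assoc]

lemma measurable_flowDiv (A : Matrix (Fin d) (Fin d) ℝ) (δ : ℝ) (w : (Fin d → ℝ) → ℝ) :
    Measurable (flowDiv A δ w) :=
  Finset.measurable_fun_sum _ fun _ _ => measurable_fderiv_apply_const ℝ _ _

lemma tendsto_flowDiv_zero (hA : A.det ≠ 0) (hz : z ≠ 0) (hw : DifferentiableAt ℝ w z) :
    Tendsto (fun δ => flowDiv A δ w z) (𝓝[>] 0) (𝓝 (flowDiv A 0 w z)) := by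
  refine tendsto_finsetSum _ fun i _ => ?_
  have hG := gradSq_pos hA hz
  have hG0 : gradSq A z + 0 ≠ 0 := by rw [add_zero]; exact hG.ne'
  rw [fderiv_mul_flowField_apply hw hG0]
  refine Tendsto.congr' (eventually_mem_nhdsWithin.mono fun δ (hδ : 0 < δ) =>
    (fderiv_mul_flowField_apply hw (by positivity) i _).symm) ?_
  refine ContinuousAt.continuousWithinAt ?_
  simp only [flowField, Pi.smul_apply, smul_eq_mul]
  fun_prop (disch := positivity)

end GradientFlow

section DivergenceTheorem

open scoped Matrix

variable {d : ℕ} {A : Matrix (Fin d) (Fin d) ℝ} {w : (Fin d → ℝ) → ℝ} {Ψ ψ : ℝ → ℝ} {δ : ℝ}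

/-- `Ψ` is a bounded `C¹` function with bounded derivative `ψ`. -/
structure IsBoundedPrimitive (Ψ ψ : ℝ → ℝ) : Prop where
  hasDerivAt : ∀ y, HasDerivAt Ψ (ψ y) y
  continuous_deriv : Continuous ψ
  exists_abs_le : ∃ B, ∀ y, |Ψ y| ≤ B
  exists_abs_deriv_le : ∃ B, ∀ y, |ψ y| ≤ B

lemma IsBoundedPrimitive.continuous (hΨ : IsBoundedPrimitive Ψ ψ) : Continuous Ψ :=
  continuous_iff_continuousAt.2 fun y => (hΨ.hasDerivAt y).continuousAt

lemma IsBoundedPrimitive.comp_div (hΨ : IsBoundedPrimitive Ψ ψ) (x : ℝ) :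
    IsBoundedPrimitive (fun y => Ψ (y / x)) (fun y => x⁻¹ * ψ (y / x)) where
  hasDerivAt y := by
    have h := (hΨ.hasDerivAt (y / x)).comp y ((hasDerivAt_id y).div_const x)
    rwa [one_div, mul_comm] at h
  continuous_deriv := continuous_const.mul (hΨ.continuous_deriv.comp (continuous_id.div_const x))
  exists_abs_le := hΨ.exists_abs_le.imp fun _ hB y => hB (y / x)
  exists_abs_deriv_le := by
    obtain ⟨B, hB⟩ := hΨ.exists_abs_deriv_le
    refine ⟨|x⁻¹| * B, fun y => ?_⟩
    rw [abs_mul]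
    gcongr
    exact hB _

lemma fderiv_comp_FqR_apply (hA : A.IsSymm) (hΨ : IsBoundedPrimitive Ψ ψ) (z v : Fin d → ℝ) :
    fderiv ℝ (Ψ ∘ FqR A) z v = ψ (FqR A z) * ((A *ᵥ z) ⬝ᵥ v) := by
  have hF := ((contDiff_FqR A).differentiable one_ne_zero z).hasFDerivAt
  rw [((hΨ.hasDerivAt (FqR A z)).comp_hasFDerivAt z hF).fderiv]
  simp [fderiv_FqR_apply hA]

lemma sq_apply_le_gradSq (A : Matrix (Fin d) (Fin d) ℝ) (z : Fin d → ℝ) (i : Fin d) :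
    (A *ᵥ z) i ^ 2 ≤ gradSq A z := by
  rw [sq]
  exact Finset.single_le_sum (f := fun i => (A *ᵥ z) i * (A *ᵥ z) i)
    (fun i _ => mul_self_nonneg _) (Finset.mem_univ i)

lemma abs_flowField_apply_le_of_pos (hδ : 0 < δ) (z : Fin d → ℝ) (i : Fin d) :
    |flowField A δ z i| ≤ 1 + δ⁻¹ := by
  have hG := gradSq_add_pos (A := A) hδ z
  rw [flowField, Pi.smul_apply, smul_eq_mul, abs_mul, abs_of_pos (inv_pos.2 hG),
    inv_mul_le_iff₀ hG]
  calc |(A *ᵥ z) i| ≤ (A *ᵥ z) i ^ 2 + 1 := by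
        nlinarith [sq_nonneg (|(A *ᵥ z) i| - 1), sq_abs ((A *ᵥ z) i)]
    _ ≤ gradSq A z + 1 := by gcongr; exact sq_apply_le_gradSq A z i
    _ ≤ gradSq A z + 1 + (δ + gradSq A z * δ⁻¹) := by
        have := gradSq_nonneg A z
        exact le_add_of_nonneg_right (by positivity)
    _ = (gradSq A z + δ) * (1 + δ⁻¹) := by field_simp; ring

lemma abs_mulVec_apply_mul_flowField_apply_le_one (hδ : 0 < δ) (z : Fin d → ℝ) (i : Fin d) :
    |(A *ᵥ z) i * flowField A δ z i| ≤ 1 := by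
  have hG := gradSq_add_pos (A := A) hδ z
  have hsq : (A *ᵥ z) i * flowField A δ z i = (A *ᵥ z) i ^ 2 / (gradSq A z + δ) := by
    rw [flowField, Pi.smul_apply, smul_eq_mul]
    ring
  rw [hsq, abs_of_nonneg (by positivity), div_le_one hG]
  exact (sq_apply_le_gradSq A z i).trans (le_add_of_nonneg_right hδ.le)

lemma integrable_mulVec_mul_flowField_mul (hδ : 0 < δ) (hw : Integrable w) (i : Fin d) :
    Integrable fun z => (A *ᵥ z) i * flowField A δ z i * w z :=
  hw.bdd_mul ((contDiff_mulVec_apply A i).mul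
    (contDiff_flowField_apply hδ i)).continuous.aestronglyMeasurable
    (ae_of_all _ fun z => abs_mulVec_apply_mul_flowField_apply_le_one hδ z i)

lemma dotProduct_flowField (A : Matrix (Fin d) (Fin d) ℝ) (δ : ℝ) (z : Fin d → ℝ) :
    (A *ᵥ z) ⬝ᵥ flowField A δ z = gradSq A z / (gradSq A z + δ) := by
  rw [flowField, dotProduct_smul, smul_eq_mul, ← gradSq, div_eq_inv_mul]

lemma integrable_comp_FqR_mul {φ : ℝ → ℝ} {f : (Fin d → ℝ) → ℝ} (hφ : Measurable φ)
    (hbdd : ∃ B, ∀ y, |φ y| ≤ B) (hf : Integrable f) : Integrable fun z => φ (FqR A z) * f z := by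
  obtain ⟨B, hB⟩ := hbdd
  exact hf.bdd_mul (hφ.comp (contDiff_FqR A).continuous.measurable).aestronglyMeasurable
    (ae_of_all _ fun z => hB _)

variable [NeZero d]

lemma integrable_fderiv_mul_flowField (hdet : A.det ≠ 0) (hδ : 0 < δ) (hw : IsFlowAdmissible w)
    (i : Fin d) :
    Integrable fun z => fderiv ℝ (fun z => w z * flowField A δ z i) z (Pi.single i 1) := by
  obtain ⟨C, -, hC⟩ := exists_abs_fderiv_mul_flowField_le hdet
  refine (hw.integrable_flowMajorant.const_mul C).mono'
    (measurable_fderiv_apply_const ℝ _ _).aestronglyMeasurable ?_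
  filter_upwards [Measure.ae_ne volume 0] with z hz
  exact hC δ hδ.le z hz i w (hw.contDiff.differentiable one_ne_zero z)

lemma integrable_flowDiv (hdet : A.det ≠ 0) (hδ : 0 ≤ δ) (hw : IsFlowAdmissible w) :
    Integrable (flowDiv A δ w) := by
  obtain ⟨C, -, hC⟩ := exists_abs_flowDiv_le hdet
  refine (hw.integrable_flowMajorant.const_mul C).mono'
    (measurable_flowDiv A δ w).aestronglyMeasurable ?_
  filter_upwards [Measure.ae_ne volume 0] with z hz
  exact hC δ hδ z hz w (hw.contDiff.differentiable one_ne_zero z)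

lemma tendsto_integral_gradSq_div_mul (hdet : A.det ≠ 0) {f : (Fin d → ℝ) → ℝ}
    (hf : Integrable f) :
    Tendsto (fun δ => ∫ z, gradSq A z / (gradSq A z + δ) * f z) (𝓝[>] 0) (𝓝 (∫ z, f z)) := by
  have hmeas := (contDiff_gradSq A).continuous.measurable
  refine tendsto_integral_filter_of_dominated_convergence (fun z => ‖f z‖)
    (.of_forall fun δ => (hmeas.div (hmeas.add_const δ)).aestronglyMeasurable.mul hf.1)
    (eventually_mem_nhdsWithin.mono fun δ (hδ : 0 < δ) => ae_of_all _ fun z => ?_) hf.norm ?_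
  · have hG := gradSq_nonneg A z
    rw [norm_mul, Real.norm_of_nonneg (by positivity)]
    exact mul_le_of_le_one_left (norm_nonneg _)
      (div_le_one_of_le₀ (le_add_of_nonneg_right hδ.le) (by positivity))
  · filter_upwards [Measure.ae_ne volume 0] with z hz
    have hG := gradSq_pos hdet hz
    have hcont : ContinuousAt (fun δ => gradSq A z / (gradSq A z + δ) * f z) 0 := by
      fun_prop (disch := positivity)
    simpa [hG.ne'] using hcont.tendsto.mono_left nhdsWithin_le_nhds

lemma integral_comp_FqR_mul_fderiv (hA : A.IsSymm) (hdet : A.det ≠ 0) (hδ : 0 < δ)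
    (hΨ : IsBoundedPrimitive Ψ ψ) (hw : IsFlowAdmissible w) (i : Fin d) :
    ∫ z, Ψ (FqR A z) * fderiv ℝ (fun z => w z * flowField A δ z i) z (Pi.single i 1) =
      -∫ z, ψ (FqR A z) * ((A *ᵥ z) i * flowField A δ z i * w z) := by
  have hfield := contDiff_flowField_apply (A := A) hδ i
  have hdiffF := (contDiff_FqR A).differentiable one_ne_zero
  have hfderiv : ∀ z, fderiv ℝ (Ψ ∘ FqR A) z (Pi.single i 1) * (w z * flowField A δ z i) =
      ψ (FqR A z) * ((A *ᵥ z) i * flowField A δ z i * w z) := fun z => by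
    rw [fderiv_comp_FqR_apply hA hΨ, dotProduct_single_one]
    ring
  have hint : Integrable fun z => w z * flowField A δ z i :=
    hw.integrable.mul_bdd hfield.continuous.aestronglyMeasurable
      (ae_of_all _ fun z => abs_flowField_apply_le_of_pos hδ z i)
  rw [← integral_congr_ae (ae_of_all _ hfderiv)]
  refine integral_mul_fderiv_eq_neg_fderiv_mul_of_integrable ?_ ?_ ?_
    (fun z _ => (hΨ.hasDerivAt _).differentiableAt.comp z (hdiffF z))
    (fun z _ => (hw.contDiff.mul hfield).differentiable one_ne_zero z)
  · exact (integrable_comp_FqR_mul hΨ.continuous_deriv.measurable hΨ.exists_abs_deriv_le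
      (integrable_mulVec_mul_flowField_mul hδ hw.integrable i)).congr
      (ae_of_all _ fun z => (hfderiv z).symm)
  · exact integrable_comp_FqR_mul hΨ.continuous.measurable hΨ.exists_abs_le
      (integrable_fderiv_mul_flowField hdet hδ hw i)
  · exact integrable_comp_FqR_mul hΨ.continuous.measurable hΨ.exists_abs_le hint

lemma integral_comp_FqR_mul_flowDiv_of_pos (hA : A.IsSymm) (hdet : A.det ≠ 0) (hδ : 0 < δ)
    (hΨ : IsBoundedPrimitive Ψ ψ) (hw : IsFlowAdmissible w) :
    ∫ z, Ψ (FqR A z) * flowDiv A δ w z =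
      -∫ z, gradSq A z / (gradSq A z + δ) * (ψ (FqR A z) * w z) := by
  have hterm : ∀ i, Integrable fun z =>
      ψ (FqR A z) * ((A *ᵥ z) i * flowField A δ z i * w z) := fun i =>
    integrable_comp_FqR_mul hΨ.continuous_deriv.measurable hΨ.exists_abs_deriv_le
      (integrable_mulVec_mul_flowField_mul hδ hw.integrable i)
  have hsum : ∀ z, gradSq A z / (gradSq A z + δ) * (ψ (FqR A z) * w z) =
      ∑ i, ψ (FqR A z) * ((A *ᵥ z) i * flowField A δ z i * w z) := fun z => by
    rw [← dotProduct_flowField, dotProduct, Finset.sum_mul]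
    exact Finset.sum_congr rfl fun i _ => by ring
  simp only [flowDiv, Finset.mul_sum, hsum]
  rw [integral_finsetSum _ fun i _ => hterm i, integral_finsetSum _ fun i _ =>
    integrable_comp_FqR_mul hΨ.continuous.measurable hΨ.exists_abs_le
      (integrable_fderiv_mul_flowField hdet hδ hw i), ← Finset.sum_neg_distrib]
  exact Finset.sum_congr rfl fun i _ => integral_comp_FqR_mul_fderiv hA hdet hδ hΨ hw i

theorem integral_comp_FqR_mul_flowDiv (hA : A.IsSymm) (hdet : A.det ≠ 0)
    (hΨ : IsBoundedPrimitive Ψ ψ) (hw : IsFlowAdmissible w) :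
    ∫ z, Ψ (FqR A z) * flowDiv A 0 w z = -∫ z, ψ (FqR A z) * w z := by
  obtain ⟨B, hB⟩ := hΨ.exists_abs_le
  obtain ⟨C, -, hC⟩ := exists_abs_flowDiv_le hdet
  have hdiff := hw.contDiff.differentiable one_ne_zero
  have hleft : Tendsto (fun δ => ∫ z, Ψ (FqR A z) * flowDiv A δ w z) (𝓝[>] 0)
      (𝓝 (∫ z, Ψ (FqR A z) * flowDiv A 0 w z)) := by
    refine tendsto_integral_filter_of_dominated_convergence
      (fun z => B * (C * flowMajorant w z)) (.of_forall fun δ => ?_)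
      (eventually_mem_nhdsWithin.mono fun δ (hδ : 0 < δ) => ?_)
      ((hw.integrable_flowMajorant.const_mul C).const_mul B) ?_
    · exact ((hΨ.continuous.comp (contDiff_FqR A).continuous).measurable.mul
        (measurable_flowDiv A δ w)).aestronglyMeasurable
    · filter_upwards [Measure.ae_ne volume 0] with z hz
      rw [norm_mul]
      exact mul_le_mul (hB _) (hC δ hδ.le z hz w (hdiff z)) (norm_nonneg _)
        ((abs_nonneg _).trans (hB 0))
    · filter_upwards [Measure.ae_ne volume 0] with z hz
      exact (tendsto_flowDiv_zero hdet hz (hdiff z)).const_mul _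
  have hright : Tendsto (fun δ => ∫ z, gradSq A z / (gradSq A z + δ) * (ψ (FqR A z) * w z))
      (𝓝[>] 0) (𝓝 (∫ z, ψ (FqR A z) * w z)) :=
    tendsto_integral_gradSq_div_mul hdet (integrable_comp_FqR_mul hΨ.continuous_deriv.measurable
      hΨ.exists_abs_deriv_le hw.integrable)
  refine tendsto_nhds_unique hleft (hright.neg.congr' ?_)
  filter_upwards [self_mem_nhdsWithin] with δ hδ
  exact (integral_comp_FqR_mul_flowDiv_of_pos hA hdet hδ hΨ hw).symm

end DivergenceTheorem

section SingularIntegral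

/-- The truncation of `y` to the interval `[-ε, ε]`: a primitive of its indicator function. -/
def clamp (ε y : ℝ) : ℝ := max (-ε) (min ε y)

lemma continuous_clamp (ε : ℝ) : Continuous (clamp ε) := by
  unfold clamp
  fun_prop

lemma abs_clamp_le {ε : ℝ} (hε : 0 ≤ ε) (y : ℝ) : |clamp ε y| ≤ ε :=
  abs_le.2 ⟨le_max_left _ _, max_le (by linarith) (min_le_left _ _)⟩

lemma clamp_of_abs_le {ε y : ℝ} (hy : |y| ≤ ε) : clamp ε y = y := by
  rw [clamp, min_eq_right (abs_le.1 hy).2, max_eq_right (abs_le.1 hy).1]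

lemma clamp_of_le {ε y : ℝ} (hε : 0 ≤ ε) (hy : ε ≤ y) : clamp ε y = ε := by
  rw [clamp, min_eq_left hy, max_eq_right (by linarith)]

lemma clamp_of_le_neg {ε y : ℝ} (hy : y ≤ -ε) : clamp ε y = -ε :=
  max_eq_left ((min_le_right _ _).trans hy)

lemma abs_clamp_sub_clamp_le (ε ε' y y' : ℝ) :
    |clamp ε y - clamp ε' y'| ≤ max |ε - ε'| |y - y'| := by
  refine (abs_max_sub_max_le_max _ _ _ _).trans (max_le ?_ (abs_min_sub_min_le_max _ _ _ _))
  rw [neg_sub_neg, abs_sub_comm]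
  exact le_max_left _ _

/-- The Steklov mean of `clamp (ε + h)` at scale `h`: a `C¹` approximation of `clamp ε` with slope
one on `[-ε, ε]`. -/
def steklovClamp (ε h y : ℝ) : ℝ := (2 * h)⁻¹ * ∫ t in (y - h)..(y + h), clamp (ε + h) t

/-- The derivative of `steklovClamp ε h`. -/
def steklovClampDeriv (ε h y : ℝ) : ℝ :=
  (2 * h)⁻¹ * (clamp (ε + h) (y + h) - clamp (ε + h) (y - h))

lemma hasDerivAt_steklovClamp (ε h y : ℝ) :
    HasDerivAt (steklovClamp ε h) (steklovClampDeriv ε h y) y := by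
  have hcont := continuous_clamp (ε + h)
  have hint := fun a b => hcont.intervalIntegrable (μ := volume) a b
  have hprim := fun u => intervalIntegral.integral_hasDerivAt_right (hint 0 u)
    hcont.stronglyMeasurable.stronglyMeasurableAtFilter hcont.continuousAt
  have hsub := ((hprim (y + h)).comp_add_const y h).sub ((hprim (y - h)).comp_sub_const y h)
  refine (hsub.const_mul (2 * h)⁻¹).congr_of_eventuallyEq (.of_forall fun u => ?_)
  exact congrArg _ (intervalIntegral.integral_interval_sub_left (hint _ _) (hint _ _)).symm

lemma abs_steklovClamp_sub_clamp_le {h : ℝ} (hh : 0 < h) (ε y : ℝ) :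
    |steklovClamp ε h y - clamp ε y| ≤ h := by
  have hint := (continuous_clamp (ε + h)).intervalIntegrable (μ := volume) (y - h) (y + h)
  have hmean : steklovClamp ε h y - clamp ε y =
      (2 * h)⁻¹ * ∫ t in (y - h)..(y + h), (clamp (ε + h) t - clamp ε y) := by
    rw [intervalIntegral.integral_sub hint intervalIntegrable_const,
      intervalIntegral.integral_const, mul_sub, smul_eq_mul, steklovClamp]
    field_simp
    ring
  have hbound : |∫ t in (y - h)..(y + h), (clamp (ε + h) t - clamp ε y)| ≤
      h * |y + h - (y - h)| := by
    rw [← Real.norm_eq_abs]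
    refine intervalIntegral.norm_integral_le_of_norm_le_const fun t ht => ?_
    rw [uIoc_of_le (by linarith), mem_Ioc] at ht
    refine (abs_clamp_sub_clamp_le _ _ _ _).trans (max_le ?_ (abs_le.2 ⟨?_, ?_⟩))
    · rw [add_sub_cancel_left, abs_of_pos hh]
    all_goals linarith
  rw [hmean, abs_mul, abs_of_pos (by positivity), inv_mul_le_iff₀ (by positivity)]
  refine hbound.trans_eq ?_
  rw [abs_of_pos (by linarith)]
  ring

lemma abs_steklovClampDeriv_le_one {h : ℝ} (hh : 0 < h) (ε y : ℝ) :
    |steklovClampDeriv ε h y| ≤ 1 := by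
  rw [steklovClampDeriv, abs_mul, abs_of_pos (by positivity), inv_mul_le_iff₀ (by positivity)]
  refine (abs_clamp_sub_clamp_le _ _ _ _).trans (max_le ?_ ?_)
  · rw [sub_self, abs_zero]
    positivity
  · rw [abs_of_pos (by linarith)]
    linarith

lemma tendsto_steklovClampDeriv {ε : ℝ} (hε : 0 ≤ ε) (y : ℝ) :
    Tendsto (fun h => steklovClampDeriv ε h y) (𝓝[>] 0) (𝓝 ({y | |y| ≤ ε}.indicator 1 y)) := by
  by_cases hy : |y| ≤ ε
  · rw [indicator_of_mem (by exact hy)]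
    refine tendsto_const_nhds.congr' ?_
    filter_upwards [self_mem_nhdsWithin] with h (hh : 0 < h)
    have := abs_le.1 hy
    rw [steklovClampDeriv, clamp_of_abs_le (abs_le.2 ⟨by linarith, by linarith⟩),
      clamp_of_abs_le (abs_le.2 ⟨by linarith, by linarith⟩), Pi.one_apply]
    field_simp
    ring
  · rw [indicator_of_notMem (by exact hy)]
    refine tendsto_const_nhds.congr' ?_
    filter_upwards [Ioo_mem_nhdsGT (by linarith : 0 < (|y| - ε) / 2)] with h ⟨hh, hhy⟩
    rcases le_abs.1 (le_refl |y|) with habs | habs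
    · rw [steklovClampDeriv, clamp_of_le (by linarith) (by linarith),
        clamp_of_le (by linarith) (by linarith), sub_self, mul_zero]
    · rw [steklovClampDeriv, clamp_of_le_neg (by linarith), clamp_of_le_neg (by linarith),
        sub_self, mul_zero]

lemma isBoundedPrimitive_steklovClamp {ε h : ℝ} (hε : 0 ≤ ε) (hh : 0 < h) :
    IsBoundedPrimitive (steklovClamp ε h) (steklovClampDeriv ε h) where
  hasDerivAt := hasDerivAt_steklovClamp ε h
  continuous_deriv := by
    have := continuous_clamp (ε + h)
    unfold steklovClampDeriv
    fun_prop
  exists_abs_le := ⟨h + ε, fun y => by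
    linarith [abs_sub_abs_le_abs_sub (steklovClamp ε h y) (clamp ε y), abs_clamp_le hε y,
      abs_steklovClamp_sub_clamp_le hh ε y]⟩
  exists_abs_deriv_le := ⟨1, abs_steklovClampDeriv_le_one hh ε⟩

variable {d : ℕ} {A : Matrix (Fin d) (Fin d) ℝ} {w : (Fin d → ℝ) → ℝ}

lemma tendsto_integral_comp_FqR_mul {ι : Type*} {l : Filter ι} [l.IsCountablyGenerated]
    {φ : ι → ℝ → ℝ} {φ₀ : ℝ → ℝ} {B : ℝ} {f : (Fin d → ℝ) → ℝ}
    (hφ : ∀ᶠ n in l, Continuous (φ n)) (hB : ∀ᶠ n in l, ∀ y, |φ n y| ≤ B)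
    (hlim : ∀ y, Tendsto (φ · y) l (𝓝 (φ₀ y))) (hf : Integrable f) :
    Tendsto (fun n => ∫ z, φ n (FqR A z) * f z) l (𝓝 (∫ z, φ₀ (FqR A z) * f z)) := by
  refine tendsto_integral_filter_of_dominated_convergence (fun z => B * ‖f z‖)
    (hφ.mono fun n hn => ?_) (hB.mono fun n hn => ae_of_all _ fun z => ?_)
    (hf.norm.const_mul B) (ae_of_all _ fun z => (hlim _).mul_const _)
  · exact (hn.comp (contDiff_FqR A).continuous).aestronglyMeasurable.mul hf.1
  · rw [norm_mul]
    exact mul_le_mul_of_nonneg_right (hn _) (norm_nonneg _)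

lemma setIntegral_abs_FqR_le_eq [NeZero d] (hA : A.IsSymm) (hdet : A.det ≠ 0)
    (hw : IsFlowAdmissible w) {ε : ℝ} (hε : 0 ≤ ε) :
    ∫ z in {z | |FqR A z| ≤ ε}, w z = -∫ z, clamp ε (FqR A z) * flowDiv A 0 w z := by
  have hsmall : ∀ᶠ h : ℝ in 𝓝[>] 0, h ∈ Ioo (0 : ℝ) 1 := Ioo_mem_nhdsGT one_pos
  have hleft := tendsto_integral_comp_FqR_mul (A := A) (B := 1)
    (hsmall.mono fun h hh => (isBoundedPrimitive_steklovClamp hε hh.1).continuous_deriv)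
    (hsmall.mono fun h hh => abs_steklovClampDeriv_le_one hh.1 ε)
    (tendsto_steklovClampDeriv hε) hw.integrable
  have hright := tendsto_integral_comp_FqR_mul (A := A) (B := 1 + ε)
    (hsmall.mono fun h hh => (isBoundedPrimitive_steklovClamp hε hh.1).continuous)
    (hsmall.mono fun h hh y => by
      linarith [abs_sub_abs_le_abs_sub (steklovClamp ε h y) (clamp ε y), abs_clamp_le hε y,
        abs_steklovClamp_sub_clamp_le hh.1 ε y, hh.2])
    (fun y => tendsto_iff_norm_sub_tendsto_zero.2 (squeeze_zero' (.of_forall fun h => norm_nonneg _)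
      (hsmall.mono fun h hh => abs_steklovClamp_sub_clamp_le hh.1 ε y)
      (tendsto_id.mono_left nhdsWithin_le_nhds)))
    (integrable_flowDiv hdet le_rfl hw)
  have hindicator : ∫ z, {y | |y| ≤ ε}.indicator 1 (FqR A z) * w z =
      ∫ z in {z | |FqR A z| ≤ ε}, w z := by
    rw [← integral_indicator
      (measurableSet_le (contDiff_FqR A).continuous.abs.measurable measurable_const)]
    refine integral_congr_ae (ae_of_all _ fun z => ?_)
    simp [indicator_apply]
  rw [← hindicator]
  refine tendsto_nhds_unique hleft (hright.neg.congr' (hsmall.mono fun h hh => ?_))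
  rw [integral_comp_FqR_mul_flowDiv hA hdet (isBoundedPrimitive_steklovClamp hε hh.1) hw, neg_neg]

lemma tendsto_clamp_div (y : ℝ) :
    Tendsto (fun ε => clamp ε y / (2 * ε)) (𝓝[>] 0) (𝓝 (Real.sign y / 2)) := by
  refine tendsto_const_nhds.congr' ?_
  have hsmall : ∀ᶠ ε : ℝ in 𝓝[>] 0, 0 < ε ∧ (y ≠ 0 → ε < |y|) := by
    refine eventually_mem_nhdsWithin.and (eventually_imp_distrib_left.2 fun hy => ?_)
    exact (eventually_lt_nhds (abs_pos.2 hy)).filter_mono nhdsWithin_le_nhds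
  filter_upwards [hsmall] with ε ⟨hε, hεy⟩
  rcases lt_trichotomy y 0 with hy | rfl | hy
  · have := hεy hy.ne
    rw [abs_of_neg hy] at this
    rw [Real.sign_of_neg hy, clamp_of_le_neg (by linarith)]
    field_simp
  · rw [Real.sign_zero, clamp_of_abs_le (by simpa using hε.le), zero_div, zero_div]
  · have := hεy hy.ne'
    rw [abs_of_pos hy] at this
    rw [Real.sign_of_pos hy, clamp_of_le hε.le this.le]
    field_simp

theorem tendsto_setIntegral_abs_FqR_le_div [NeZero d] (hA : A.IsSymm) (hdet : A.det ≠ 0)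
    (hw : IsFlowAdmissible w) :
    Tendsto (fun ε => 1 / (2 * ε) * ∫ z in {z | |FqR A z| ≤ ε}, w z) (𝓝[>] 0)
      (𝓝 (-∫ z, Real.sign (FqR A z) / 2 * flowDiv A 0 w z)) := by
  have hlim := tendsto_integral_comp_FqR_mul (A := A) (B := 1 / 2) (l := 𝓝[>] 0)
    (.of_forall fun ε : ℝ => (continuous_clamp ε).div_const (2 * ε))
    (eventually_mem_nhdsWithin.mono fun ε (hε : 0 < ε) y => ?_) tendsto_clamp_div
    (integrable_flowDiv hdet le_rfl hw)
  · refine hlim.neg.congr' ?_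
    filter_upwards [self_mem_nhdsWithin] with ε (hε : 0 < ε)
    rw [setIntegral_abs_FqR_le_eq hA hdet hw hε.le, mul_neg, ← integral_const_mul]
    exact congrArg _ (integral_congr_ae (ae_of_all _ fun z => by ring))
  · rw [abs_div, abs_of_pos (by positivity : 0 < 2 * ε), div_le_div_iff₀ (by positivity) two_pos]
    linarith [abs_clamp_le hε.le y]

end SingularIntegral

section KernelComparison

variable {d : ℕ} {A : Matrix (Fin d) (Fin d) ℝ} {w : (Fin d → ℝ) → ℝ}

lemma abs_sign_div_two_le (y : ℝ) : |Real.sign y / 2| ≤ 1 / 2 := by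
  rcases Real.sign_apply_eq y with h | h | h <;> norm_num [h]

lemma isBoundedPrimitive_hProfilePrimitive : IsBoundedPrimitive hProfilePrimitive hProfile where
  hasDerivAt := hasDerivAt_hProfilePrimitive
  continuous_deriv := continuous_hProfile
  exists_abs_le := by
    obtain ⟨C, hC, hdecay⟩ := exists_abs_hProfilePrimitive_sub_sign_le
    refine ⟨C + 1 / 2, fun s => ?_⟩
    have hdiv : C / (1 + s ^ 2) ≤ C := div_le_self hC (by linarith [sq_nonneg s])
    linarith [hdecay s, abs_sign_div_two_le s,
      abs_sub_abs_le_abs_sub (hProfilePrimitive s) (Real.sign s / 2)]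
  exists_abs_deriv_le := exists_abs_hProfile_le.imp fun _ hB => hB.2

lemma measurable_sign : Measurable Real.sign :=
  Measurable.ite measurableSet_Iio measurable_const
    (Measurable.ite measurableSet_Ioi measurable_const measurable_const)

lemma sign_div_of_pos {x : ℝ} (hx : 0 < x) (y : ℝ) : Real.sign (y / x) = Real.sign y := by
  simp only [Real.sign, div_lt_iff₀ hx, lt_div_iff₀ hx, zero_mul]

lemma integrable_inv_one_add_sq_mul (x : ℝ) {f : (Fin d → ℝ) → ℝ} (hf : Integrable f) :
    Integrable fun z => (1 + (FqR A z / x) ^ 2)⁻¹ * f z := by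
  refine integrable_comp_FqR_mul (φ := fun y => (1 + (y / x) ^ 2)⁻¹) (by fun_prop)
    ⟨1, fun y => ?_⟩ hf
  rw [abs_of_nonneg (by positivity)]
  exact inv_le_one_of_one_le₀ (by linarith [sq_nonneg (y / x)])

lemma exists_abs_integral_hProfilePrimitive_sub_sign_le :
    ∃ C : ℝ, 0 ≤ C ∧ ∀ (A : Matrix (Fin d) (Fin d) ℝ) {f : (Fin d → ℝ) → ℝ}, Integrable f →
      ∀ {x : ℝ}, 0 < x →
        |(∫ z, hProfilePrimitive (FqR A z / x) * f z) - ∫ z, Real.sign (FqR A z) / 2 * f z| ≤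
          C * ∫ z, (1 + (FqR A z / x) ^ 2)⁻¹ * |f z| := by
  obtain ⟨C, hC, hdecay⟩ := exists_abs_hProfilePrimitive_sub_sign_le
  refine ⟨C, hC, fun A {f} hf {x} hx => ?_⟩
  have hprim := isBoundedPrimitive_hProfilePrimitive.comp_div x
  have hsign : Integrable fun z => Real.sign (FqR A z) / 2 * f z :=
    integrable_comp_FqR_mul (measurable_sign.div_const 2) ⟨1 / 2, abs_sign_div_two_le⟩ hf
  rw [← integral_sub (integrable_comp_FqR_mul hprim.continuous.measurable hprim.exists_abs_le hf)
    hsign, ← integral_const_mul, ← Real.norm_eq_abs]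
  refine norm_integral_le_of_norm_le
    ((integrable_inv_one_add_sq_mul x hf.abs).const_mul C) (ae_of_all _ fun z => ?_)
  rw [← sub_mul, norm_mul, ← mul_assoc, ← div_eq_mul_inv, ← sign_div_of_pos hx]
  exact mul_le_mul_of_nonneg_right (hdecay _) (norm_nonneg _)

variable [NeZero d]

lemma integral_mul_hFun_eq (hA : A.IsSymm) (hdet : A.det ≠ 0) (hw : IsFlowAdmissible w) {x : ℝ}
    (hx : 0 < x) :
    ∫ z, w z * hFun x (FqR A z) =
      hConst x * (∫ z, w z) - ∫ z, hProfilePrimitive (FqR A z / x) * flowDiv A 0 w z := by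
  have hprim := isBoundedPrimitive_hProfilePrimitive.comp_div x
  rw [integral_comp_FqR_mul_flowDiv hA hdet hprim hw, sub_neg_eq_add, ← integral_const_mul,
    ← integral_add (hw.integrable.const_mul _) (integrable_comp_FqR_mul
      hprim.continuous_deriv.measurable hprim.exists_abs_deriv_le hw.integrable)]
  refine integral_congr_ae (ae_of_all _ fun z => ?_)
  simp only [hFun_eq_hConst_add_hProfile hx]
  ring

theorem exists_abs_integral_mul_hFun_sub_le :
    ∃ C : ℝ, 0 ≤ C ∧ ∀ {A : Matrix (Fin d) (Fin d) ℝ}, A.IsSymm → A.det ≠ 0 →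
      ∀ {w : (Fin d → ℝ) → ℝ}, IsFlowAdmissible w → ∀ {x : ℝ}, 0 < x →
        |(∫ z, w z * hFun x (FqR A z)) - -∫ z, Real.sign (FqR A z) / 2 * flowDiv A 0 w z| ≤
          C * (x * (∫ z, |w z|) + ∫ z, (1 + (FqR A z / x) ^ 2)⁻¹ * |flowDiv A 0 w z|) := by
  obtain ⟨C₀, hC₀, hconst⟩ := exists_abs_hConst_le
  obtain ⟨C₁, hC₁, hcomp⟩ := exists_abs_integral_hProfilePrimitive_sub_sign_le (d := d)
  refine ⟨C₀ + C₁, by positivity, fun {A} hA hdet {w} hw {x} hx => ?_⟩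
  specialize hcomp A (integrable_flowDiv hdet le_rfl hw) hx
  have hc : |hConst x * ∫ z, w z| ≤ C₀ * x * ∫ z, |w z| := by
    rw [abs_mul]
    exact mul_le_mul (hconst x hx) (norm_integral_le_integral_norm w) (abs_nonneg _)
      (by positivity)
  rw [integral_mul_hFun_eq hA hdet hw hx, sub_neg_eq_add, sub_add]
  set I := ∫ z, |w z|
  set J := ∫ z, (1 + (FqR A z / x) ^ 2)⁻¹ * |flowDiv A 0 w z|
  have : 0 ≤ I := integral_nonneg fun z => abs_nonneg _
  have : 0 ≤ J := integral_nonneg fun z => by positivity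
  calc _ ≤ C₀ * x * I + C₁ * J := (abs_sub _ _).trans (add_le_add hc hcomp)
    _ ≤ C₀ * x * I + C₁ * J + (C₁ * (x * I) + C₀ * J) := le_add_of_nonneg_right (by positivity)
    _ = (C₀ + C₁) * (x * I + J) := by ring

end KernelComparison

section PolynomialWeight

variable {d n : ℕ} {x y : ℝ}

/-- The model weight `(1 + ‖z‖)⁻ⁿ ‖z‖⁻²`, which dominates the divergences `flowDiv A 0 w` of
decaying `w`. -/
def polyWeight (d n : ℕ) (z : Fin d → ℝ) : ℝ := ((1 + ‖z‖) ^ n * ‖z‖ ^ 2)⁻¹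

lemma integrable_inv_one_add_norm_pow {k : ℕ} (hk : d < k) :
    Integrable fun z : Fin d → ℝ => ((1 + ‖z‖) ^ k)⁻¹ := by
  refine (integrable_one_add_norm (μ := volume) (r := k) (by simpa using hk)).congr
    (.of_forall fun z => ?_)
  simp only [Real.rpow_neg (by positivity : 0 ≤ 1 + ‖z‖), Real.rpow_natCast]

lemma integrable_inv_one_add_abs_sq : Integrable fun y : ℝ => ((1 + |y|) ^ 2)⁻¹ := by
  refine (integrable_one_add_norm (E := ℝ) (μ := volume) (r := 2) (by simp)).congr
    (.of_forall fun y => ?_)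
  simp only [Real.norm_eq_abs, Real.rpow_neg (by positivity : 0 ≤ 1 + |y|), Real.rpow_two]

lemma pow_mul_inv_one_add_pow_le {k : ℕ} (hy : 0 ≤ y) (hk : k + 2 ≤ n) :
    y ^ k * ((1 + y) ^ n)⁻¹ ≤ ((1 + y) ^ 2)⁻¹ := by
  calc y ^ k * ((1 + y) ^ n)⁻¹ ≤ (1 + y) ^ k * ((1 + y) ^ (k + 2))⁻¹ := by
        gcongr <;> linarith
    _ = ((1 + y) ^ 2)⁻¹ := by
        rw [pow_add]
        field_simp

lemma integrable_polyWeight (hd : 3 ≤ d) (hn : d ≤ n + 1) : Integrable (polyWeight d n) := by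
  have : NeZero d := ⟨by lia⟩
  refine (integrable_fun_norm_addHaar (E := Fin d → ℝ) volume
    (f := fun r => ((1 + r) ^ n * r ^ 2)⁻¹)).2 ?_
  refine integrable_inv_one_add_abs_sq.integrableOn.mono'
    (by fun_prop : Measurable _).aestronglyMeasurable ?_
  filter_upwards [ae_restrict_mem measurableSet_Ioi] with y (hy : 0 < y)
  obtain ⟨k, rfl⟩ := Nat.exists_eq_add_of_le' hd
  rw [Module.finrank_fin_fun, smul_eq_mul, Real.norm_of_nonneg (by positivity), abs_of_pos hy]
  calc y ^ (k + 3 - 1) * ((1 + y) ^ n * y ^ 2)⁻¹ = y ^ k * ((1 + y) ^ n)⁻¹ := by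
        rw [show k + 3 - 1 = k + 2 by lia, pow_add]
        field_simp
    _ ≤ ((1 + y) ^ 2)⁻¹ := pow_mul_inv_one_add_pow_le hy.le (by lia)

lemma integral_div_sq_add (hx : 0 < x) :
    ∫ y in (0 : ℝ)..1, y / (y ^ 2 + x) = (Real.log (1 + x) - Real.log x) / 2 := by
  have hderiv : ∀ y ∈ uIcc (0 : ℝ) 1,
      HasDerivAt (fun y => Real.log (y ^ 2 + x) / 2) (y / (y ^ 2 + x)) y := fun y _ => by
    refine ((((hasDerivAt_id y).fun_pow 2).add_const x).log (by positivity)).div_const 2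
      |>.congr_deriv ?_
    simp only [id, Nat.cast_ofNat, Nat.add_one_sub_one, pow_one, mul_one]
    field_simp
  have hcont : Continuous fun y : ℝ => y / (y ^ 2 + x) :=
    continuous_id.div (by fun_prop) fun y => by positivity
  rw [intervalIntegral.integral_eq_sub_of_hasDerivAt hderiv (hcont.intervalIntegrable 0 1)]
  norm_num
  ring

lemma integral_div_sq_add_le (hx : 0 < x) :
    ∫ y in (0 : ℝ)..1, y / (y ^ 2 + x) ≤ 1 + |Real.log x| := by
  have hlog : Real.log (1 + x) ≤ 1 + |Real.log x| := by
    calc Real.log (1 + x) ≤ Real.log (2 * max 1 x) := by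
          gcongr
          linarith [le_max_left 1 x, le_max_right 1 x]
      _ = Real.log 2 + Real.log (max 1 x) := Real.log_mul two_ne_zero (by positivity)
      _ ≤ 1 + |Real.log x| := by
          gcongr
          · linarith [Real.log_two_lt_d9]
          · rcases max_cases 1 x with ⟨h, -⟩ | ⟨h, -⟩ <;> rw [h]
            · simp
            · exact le_abs_self _
  rw [integral_div_sq_add hx]
  linarith [neg_abs_le (Real.log x)]

lemma div_sq_add_mul_inv_le (hx : 0 < x) (hy : 0 < y) :
    y / (y ^ 2 + x) * ((1 + y) ^ 2)⁻¹ ≤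
      (Ioc 0 1).indicator (fun y => y / (y ^ 2 + x)) y + ((1 + y) ^ 2)⁻¹ := by
  by_cases h1 : y ≤ 1
  · rw [indicator_of_mem (show y ∈ Ioc 0 1 from ⟨hy, h1⟩)]
    have : ((1 + y) ^ 2)⁻¹ ≤ 1 := inv_le_one_of_one_le₀ (one_le_pow₀ (by linarith))
    have : y / (y ^ 2 + x) * ((1 + y) ^ 2)⁻¹ ≤ y / (y ^ 2 + x) :=
      mul_le_of_le_one_right (by positivity) this
    linarith [show 0 ≤ ((1 + y) ^ 2)⁻¹ by positivity]
  · rw [indicator_of_notMem fun h => h1 h.2, zero_add]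
    refine mul_le_of_le_one_left (by positivity) ?_
    rw [div_le_one (by positivity)]
    nlinarith

lemma exists_setIntegral_div_sq_add_mul_inv_le :
    ∃ C : ℝ, 0 ≤ C ∧ ∀ x, 0 < x →
      IntegrableOn (fun y => y / (y ^ 2 + x) * ((1 + y) ^ 2)⁻¹) (Ioi 0) ∧
      ∫ y in Ioi 0, y / (y ^ 2 + x) * ((1 + y) ^ 2)⁻¹ ≤ C * (1 + |Real.log x|) := by
  have htail : IntegrableOn (fun y : ℝ => ((1 + y) ^ 2)⁻¹) (Ioi 0) :=
    integrable_inv_one_add_abs_sq.integrableOn.congr_fun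
      (fun y (hy : 0 < y) => by simp only [abs_of_pos hy]) measurableSet_Ioi
  set J := ∫ y : ℝ in Ioi 0, ((1 + y) ^ 2)⁻¹
  have hJ : 0 ≤ J := setIntegral_nonneg measurableSet_Ioi fun y _ => by positivity
  refine ⟨1 + J, by positivity, fun x hx => ?_⟩
  have hcont : Continuous fun y : ℝ => y / (y ^ 2 + x) :=
    continuous_id.div (by fun_prop) fun y => by positivity
  have hhead : IntegrableOn ((Ioc 0 1).indicator fun y : ℝ => y / (y ^ 2 + x)) (Ioi 0) :=
    ((integrable_indicator_iff measurableSet_Ioc).2 <|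
      hcont.integrableOn_Icc.mono_set Ioc_subset_Icc_self).integrableOn
  have hint : IntegrableOn (fun y => y / (y ^ 2 + x) * ((1 + y) ^ 2)⁻¹) (Ioi 0) := by
    refine (hhead.add htail).mono' (by fun_prop : Measurable _).aestronglyMeasurable ?_
    filter_upwards [ae_restrict_mem measurableSet_Ioi] with y (hy : 0 < y)
    rw [Real.norm_of_nonneg (by positivity)]
    exact div_sq_add_mul_inv_le hx hy
  refine ⟨hint, ?_⟩
  calc ∫ y in Ioi 0, y / (y ^ 2 + x) * ((1 + y) ^ 2)⁻¹
      ≤ ∫ y in Ioi 0, ((Ioc 0 1).indicator (fun y => y / (y ^ 2 + x)) y + ((1 + y) ^ 2)⁻¹) :=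
        setIntegral_mono_on hint (hhead.add htail) measurableSet_Ioi fun y hy =>
          div_sq_add_mul_inv_le hx hy
    _ = (∫ y in (0 : ℝ)..1, y / (y ^ 2 + x)) + J := by
        rw [integral_add hhead htail, setIntegral_indicator measurableSet_Ioc,
          inter_eq_right.2 Ioc_subset_Ioi_self, intervalIntegral.integral_of_le zero_le_one]
    _ ≤ (1 + |Real.log x|) + J * (1 + |Real.log x|) :=
        add_le_add (integral_div_sq_add_le hx)
          (le_mul_of_one_le_right hJ (le_add_of_nonneg_right (abs_nonneg _)))
    _ = (1 + J) * (1 + |Real.log x|) := by ring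

lemma integrable_polyWeight_div_add (hd : 3 ≤ d) (hn : d ≤ n + 1) (hx : 0 < x) :
    Integrable fun z => polyWeight d n z / (‖z‖ ^ 2 + x) := by
  refine ((integrable_polyWeight hd hn).div_const x).mono' ?_ (.of_forall fun z => ?_)
  · unfold polyWeight
    exact (by fun_prop : Measurable _).aestronglyMeasurable
  · unfold polyWeight
    rw [Real.norm_of_nonneg (by positivity)]
    gcongr
    linarith [sq_nonneg ‖z‖]

lemma exists_integral_polyWeight_div_add_le (hd : 4 ≤ d) (hn : d ≤ n + 2) :
    ∃ C : ℝ, 0 ≤ C ∧ ∀ x, 0 < x →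
      ∫ z, polyWeight d n z / (‖z‖ ^ 2 + x) ≤ C * (1 + |Real.log x|) := by
  obtain ⟨C, hC, hradial⟩ := exists_setIntegral_div_sq_add_mul_inv_le
  have : NeZero d := ⟨by lia⟩
  set V := d * volume.real (Metric.ball (0 : Fin d → ℝ) 1) with hVdef
  have hV : 0 ≤ V := by positivity
  refine ⟨V * C, by positivity, fun x hx => ?_⟩
  obtain ⟨hint, hle⟩ := hradial x hx
  have hpolar : ∫ z, polyWeight d n z / (‖z‖ ^ 2 + x) =
      V * ∫ y in Ioi (0 : ℝ), y ^ (d - 1) * (((1 + y) ^ n * y ^ 2)⁻¹ / (y ^ 2 + x)) := by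
    have h := integral_fun_norm_addHaar (E := Fin d → ℝ) volume
      fun r => ((1 + r) ^ n * r ^ 2)⁻¹ / (r ^ 2 + x)
    simpa only [polyWeight, Module.finrank_fin_fun, nsmul_eq_mul, smul_eq_mul, ← mul_assoc,
      ← hVdef] using h
  rw [hpolar, mul_assoc V]
  refine mul_le_mul_of_nonneg_left (le_trans ?_ hle) hV
  refine integral_mono_of_nonneg ?_ hint ?_
  all_goals filter_upwards [ae_restrict_mem measurableSet_Ioi] with y (hy : 0 < y)
  · simp only [Pi.zero_apply]
    positivity
  obtain ⟨k, rfl⟩ := Nat.exists_eq_add_of_le' hd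
  calc y ^ (k + 4 - 1) * (((1 + y) ^ n * y ^ 2)⁻¹ / (y ^ 2 + x))
      = y / (y ^ 2 + x) * (y ^ k * ((1 + y) ^ n)⁻¹) := by
        rw [show k + 4 - 1 = k + 3 by lia, pow_add]
        field_simp
    _ ≤ y / (y ^ 2 + x) * ((1 + y) ^ 2)⁻¹ := by
        gcongr
        exact pow_mul_inv_one_add_pow_le hy.le (by lia)

end PolynomialWeight

section RegularizedWeight

open scoped Matrix Matrix.Norms.Operator

variable {d m : ℕ} {A : Matrix (Fin d) (Fin d) ℝ} {x : ℝ}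

/-- A smooth substitute for `polyWeight d (2 * m)`, regularized at the scale `‖z‖² ~ x` and built
from `gradSq A` so that it is differentiable at the origin. -/
def regWeight (A : Matrix (Fin d) (Fin d) ℝ) (m : ℕ) (x : ℝ) (z : Fin d → ℝ) : ℝ :=
  ((1 + gradSq A z) ^ m * (gradSq A z + x))⁻¹

lemma regWeight_nonneg (hx : 0 < x) (z : Fin d → ℝ) : 0 ≤ regWeight A m x z := by
  have := gradSq_nonneg A z
  unfold regWeight
  positivity

lemma contDiff_regWeight (hx : 0 < x) : ContDiff ℝ 1 (regWeight A m x) :=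
  (((contDiff_const.add (contDiff_gradSq A)).pow m).mul
    ((contDiff_gradSq A).add contDiff_const)).inv fun z => by
      have := gradSq_nonneg A z
      positivity

/-- The two terms correspond to `‖z‖² ≳ x` and `‖z‖² ≲ x`. -/
lemma exists_polyWeight_le_regWeight_add (A : Matrix (Fin d) (Fin d) ℝ) (m : ℕ) :
    ∃ C : ℝ, 0 ≤ C ∧ ∀ x, 0 < x → ∀ z, z ≠ 0 →
      polyWeight d (2 * m) z ≤
        C * (regWeight A m x z + x * (polyWeight d (2 * m) z / (‖z‖ ^ 2 + x))) := by
  set K := d * ‖A‖ ^ 2 + 1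
  have hK : 1 ≤ K := le_add_of_nonneg_left (by positivity)
  refine ⟨K ^ (m + 1), by positivity, fun x hx z hz => ?_⟩
  have hz0 := norm_pos_iff.2 hz
  have hG0 := gradSq_nonneg A z
  have hG : gradSq A z ≤ K * ‖z‖ ^ 2 := (gradSq_le A z).trans (by gcongr; exact (lt_add_one _).le)
  have hden : (1 + gradSq A z) ^ m * (gradSq A z + x) ≤
      K ^ (m + 1) * ((1 + ‖z‖) ^ (2 * m) * (‖z‖ ^ 2 + x)) := by
    calc _ ≤ (K * (1 + ‖z‖) ^ 2) ^ m * (K * (‖z‖ ^ 2 + x)) := by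
          gcongr
          · nlinarith
          · nlinarith
      _ = _ := by rw [mul_pow, ← pow_mul]; ring
  have hreg : ((1 + ‖z‖) ^ (2 * m) * (‖z‖ ^ 2 + x))⁻¹ ≤ K ^ (m + 1) * regWeight A m x z := by
    rw [regWeight, ← div_eq_mul_inv, le_div_iff₀ (by positivity), inv_mul_le_iff₀ (by positivity)]
    linarith
  have hsplit : polyWeight d (2 * m) z = ((1 + ‖z‖) ^ (2 * m) * (‖z‖ ^ 2 + x))⁻¹
      + x * (polyWeight d (2 * m) z / (‖z‖ ^ 2 + x)) := by
    unfold polyWeight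
    field_simp
  have hrest : 0 ≤ x * (polyWeight d (2 * m) z / (‖z‖ ^ 2 + x)) := by
    unfold polyWeight
    positivity
  calc polyWeight d (2 * m) z = _ := hsplit
    _ ≤ K ^ (m + 1) * regWeight A m x z
        + K ^ (m + 1) * (x * (polyWeight d (2 * m) z / (‖z‖ ^ 2 + x))) :=
      add_le_add hreg (le_mul_of_one_le_left hrest (one_le_pow₀ hK))
    _ = _ := (mul_add _ _ _).symm

lemma exists_regWeight_div_norm_sq_le (hdet : A.det ≠ 0) (m : ℕ) :
    ∃ C : ℝ, 0 ≤ C ∧ ∀ x, 0 < x → ∀ z,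
      regWeight A m x z / ‖z‖ ^ 2 ≤ C * (polyWeight d (2 * m) z / (‖z‖ ^ 2 + x)) := by
  obtain ⟨c, hc, hlower⟩ := exists_mul_norm_sq_le_gradSq hdet
  set K := 2 * (c⁻¹ + 1)
  have hK : 2 ≤ K := by
    have := inv_pos.2 hc
    linarith
  refine ⟨K ^ (m + 1), by positivity, fun x hx z => ?_⟩
  have hG0 := gradSq_nonneg A z
  have hG : 2 * ‖z‖ ^ 2 ≤ K * gradSq A z := by
    have := le_inv_mul_iff₀ hc |>.2 (hlower z)
    linarith
  have hden : (1 + ‖z‖) ^ (2 * m) * (‖z‖ ^ 2 + x) ≤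
      K ^ (m + 1) * ((1 + gradSq A z) ^ m * (gradSq A z + x)) := by
    calc _ ≤ (K * (1 + gradSq A z)) ^ m * (K * (gradSq A z + x)) := by
          rw [pow_mul]
          gcongr
          · nlinarith [sq_nonneg (‖z‖ - 1)]
          · nlinarith
      _ = _ := by rw [mul_pow]; ring
  calc regWeight A m x z / ‖z‖ ^ 2
      ≤ K ^ (m + 1) * ((1 + ‖z‖) ^ (2 * m) * (‖z‖ ^ 2 + x))⁻¹ / ‖z‖ ^ 2 := by
        gcongr
        rw [regWeight, ← div_eq_mul_inv, le_div_iff₀ (by positivity),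
          inv_mul_le_iff₀ (by positivity)]
        linarith
    _ = _ := by
        simp only [polyWeight, mul_inv]
        ring

lemma hasDerivAt_inv_one_add_pow_mul_add {t : ℝ} (hx : 0 < x) (ht : 0 ≤ t) :
    HasDerivAt (fun t => ((1 + t) ^ m * (t + x))⁻¹)
      (-(m / (1 + t) + 1 / (t + x)) * ((1 + t) ^ m * (t + x))⁻¹) t := by
  have h := (((hasDerivAt_id t).const_add 1).fun_pow m).fun_mul ((hasDerivAt_id t).add_const x)
  refine (h.fun_inv (by simp only [id]; positivity)).congr_deriv ?_
  rcases m with _ | m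
  · simp [div_eq_mul_inv, sq]
  · simp only [id, Nat.add_sub_cancel, pow_succ]
    push_cast
    field_simp

lemma norm_fderiv_gradSq_le (A : Matrix (Fin d) (Fin d) ℝ) (z : Fin d → ℝ) :
    ‖fderiv ℝ (gradSq A) z‖ ≤ 2 * d * ‖A‖ ^ 2 * ‖z‖ := by
  refine ContinuousLinearMap.opNorm_le_bound _ (by positivity) fun v => ?_
  have hAz := Matrix.linfty_opNorm_mulVec A z
  have hAv := Matrix.linfty_opNorm_mulVec A v
  rw [fderiv_gradSq_apply, Real.norm_eq_abs, abs_mul, abs_two]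
  calc 2 * |(A *ᵥ z) ⬝ᵥ (A *ᵥ v)| ≤ 2 * (d * (‖A *ᵥ z‖ * ‖A *ᵥ v‖)) := by
        gcongr
        exact abs_dotProduct_le _ _
    _ ≤ 2 * (d * (‖A‖ * ‖z‖ * (‖A‖ * ‖v‖))) := by gcongr
    _ = 2 * d * ‖A‖ ^ 2 * ‖z‖ * ‖v‖ := by ring

lemma exists_norm_fderiv_regWeight_div_norm_le (hdet : A.det ≠ 0) (m : ℕ) :
    ∃ C : ℝ, 0 ≤ C ∧ ∀ x, 0 < x → ∀ z, z ≠ 0 →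
      ‖fderiv ℝ (regWeight A m x) z‖ / ‖z‖ ≤ C * (regWeight A m x z / ‖z‖ ^ 2) := by
  obtain ⟨c, hc, hlower⟩ := exists_mul_norm_sq_le_gradSq hdet
  refine ⟨(m + 1) / c * (2 * d * ‖A‖ ^ 2), by positivity, fun x hx z hz => ?_⟩
  have := norm_pos_iff.2 hz
  have hG := gradSq_pos hdet hz
  have hreg := regWeight_nonneg (A := A) (m := m) hx z
  have hlog : m / (1 + gradSq A z) + 1 / (gradSq A z + x) ≤ (m + 1) / (c * ‖z‖ ^ 2) := by
    rw [add_div]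
    gcongr <;> linarith [hlower z]
  have hfderiv : fderiv ℝ (regWeight A m x) z =
      (-(m / (1 + gradSq A z) + 1 / (gradSq A z + x)) * regWeight A m x z) •
        fderiv ℝ (gradSq A) z :=
    ((hasDerivAt_inv_one_add_pow_mul_add hx hG.le).comp_hasFDerivAt z
      ((contDiff_gradSq A).differentiable one_ne_zero z).hasFDerivAt).fderiv
  rw [hfderiv, norm_smul, norm_mul, norm_neg, Real.norm_of_nonneg hreg,
    Real.norm_of_nonneg (by positivity)]
  calc _ ≤ (m + 1) / (c * ‖z‖ ^ 2) * regWeight A m x z * (2 * d * ‖A‖ ^ 2 * ‖z‖) / ‖z‖ := by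
        gcongr
        exact norm_fderiv_gradSq_le A z
    _ = _ := by field_simp

lemma exists_flowMajorant_regWeight_le (hdet : A.det ≠ 0) (m : ℕ) :
    ∃ C : ℝ, 0 ≤ C ∧ ∀ x, 0 < x → ∀ z, z ≠ 0 →
      flowMajorant (regWeight A m x) z ≤ C * (polyWeight d (2 * m) z / (‖z‖ ^ 2 + x)) := by
  obtain ⟨C₀, hC₀, hvalue⟩ := exists_regWeight_div_norm_sq_le hdet m
  obtain ⟨C₁, hC₁, hfderiv⟩ := exists_norm_fderiv_regWeight_div_norm_le hdet m
  refine ⟨(C₁ + 1) * C₀, by positivity, fun x hx z hz => ?_⟩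
  rw [flowMajorant, abs_of_nonneg (regWeight_nonneg hx z)]
  calc _ ≤ C₁ * (regWeight A m x z / ‖z‖ ^ 2) + regWeight A m x z / ‖z‖ ^ 2 := by
        gcongr
        exact hfderiv x hx z hz
    _ = (C₁ + 1) * (regWeight A m x z / ‖z‖ ^ 2) := by ring
    _ ≤ (C₁ + 1) * (C₀ * (polyWeight d (2 * m) z / (‖z‖ ^ 2 + x))) := by
        gcongr
        exact hvalue x hx z
    _ = _ := (mul_assoc _ _ _).symm

lemma measurable_flowMajorant {w : (Fin d → ℝ) → ℝ} (hw : Measurable w) :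
    Measurable (flowMajorant w) :=
  ((measurable_fderiv ℝ w).norm.div measurable_norm).add (hw.abs.div (measurable_norm.pow_const 2))

lemma isFlowAdmissible_regWeight (hdet : A.det ≠ 0) (hd : 3 ≤ d) (hm : d ≤ 2 * m + 1)
    (hx : 0 < x) : IsFlowAdmissible (regWeight A m x) := by
  have : NeZero d := ⟨by lia⟩
  obtain ⟨C₀, hC₀, hvalue⟩ := exists_regWeight_div_norm_sq_le hdet m
  obtain ⟨C₁, -, hmajorant⟩ := exists_flowMajorant_regWeight_le hdet m
  have hcd : ContDiff ℝ 1 (regWeight A m x) := contDiff_regWeight hx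
  refine ⟨hcd, ?_, ?_⟩
  · refine ((integrable_polyWeight hd hm).const_mul C₀).mono'
      hcd.continuous.aestronglyMeasurable ?_
    filter_upwards [Measure.ae_ne volume 0] with z hz
    have hz0 := norm_pos_iff.2 hz
    rw [Real.norm_of_nonneg (regWeight_nonneg hx z), ← div_le_div_iff_of_pos_right (pow_pos hz0 2)]
    have : 0 ≤ polyWeight d (2 * m) z := by unfold polyWeight; positivity
    calc _ ≤ C₀ * (polyWeight d (2 * m) z / (‖z‖ ^ 2 + x)) := hvalue x hx z
      _ ≤ C₀ * (polyWeight d (2 * m) z / ‖z‖ ^ 2) := by gcongr; linarith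
      _ = _ := (mul_div_assoc _ _ _).symm
  · refine ((integrable_polyWeight_div_add hd hm hx).const_mul C₁).mono'
      (measurable_flowMajorant hcd.continuous.measurable).aestronglyMeasurable ?_
    filter_upwards [Measure.ae_ne volume 0] with z hz
    rw [Real.norm_of_nonneg (flowMajorant_nonneg _ z)]
    exact hmajorant x hx z hz

lemma isBoundedPrimitive_arctan : IsBoundedPrimitive Real.arctan fun y => (1 + y ^ 2)⁻¹ where
  hasDerivAt y := by simpa using Real.hasDerivAt_arctan y
  continuous_deriv := by fun_prop (disch := intros; positivity)
  exists_abs_le := ⟨Real.pi / 2, fun y => abs_le.2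
    ⟨(Real.neg_pi_div_two_lt_arctan y).le, (Real.arctan_lt_pi_div_two y).le⟩⟩
  exists_abs_deriv_le := ⟨1, fun y => by
    rw [abs_of_nonneg (by positivity)]
    exact inv_le_one_of_one_le₀ (by linarith [sq_nonneg y])⟩

/-- The factor `x` is gained by integrating `(1 + (F/x)²)⁻¹`, the derivative of `x arctan(F/x)`,
by parts. -/
lemma exists_integral_inv_one_add_sq_mul_regWeight_le (hA : A.IsSymm) (hdet : A.det ≠ 0)
    (hd : 3 ≤ d) (hm : d ≤ 2 * m + 1) :
    ∃ C : ℝ, 0 ≤ C ∧ ∀ x, 0 < x →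
      ∫ z, (1 + (FqR A z / x) ^ 2)⁻¹ * regWeight A m x z ≤
        C * (x * ∫ z, polyWeight d (2 * m) z / (‖z‖ ^ 2 + x)) := by
  have : NeZero d := ⟨by lia⟩
  obtain ⟨C₀, hC₀, hdiv⟩ := exists_abs_flowDiv_le hdet
  obtain ⟨C₁, hC₁, hmajorant⟩ := exists_flowMajorant_regWeight_le hdet m
  obtain ⟨B, hB⟩ := isBoundedPrimitive_arctan.exists_abs_le
  have hB0 : 0 ≤ B := (abs_nonneg _).trans (hB 0)
  refine ⟨B * (C₀ * C₁), by positivity, fun x hx => ?_⟩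
  have hadm := isFlowAdmissible_regWeight hdet hd hm hx
  have hparts := integral_comp_FqR_mul_flowDiv hA hdet (isBoundedPrimitive_arctan.comp_div x) hadm
  simp only [mul_assoc, integral_const_mul] at hparts
  have hbound : |∫ z, Real.arctan (FqR A z / x) * flowDiv A 0 (regWeight A m x) z| ≤
      B * (C₀ * C₁) * ∫ z, polyWeight d (2 * m) z / (‖z‖ ^ 2 + x) := by
    rw [← Real.norm_eq_abs, ← integral_const_mul]
    refine norm_integral_le_of_norm_le ((integrable_polyWeight_div_add hd hm hx).const_mul _) ?_
    filter_upwards [Measure.ae_ne volume 0] with z hz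
    rw [norm_mul, mul_assoc, mul_assoc]
    refine mul_le_mul (hB _) ?_ (norm_nonneg _) hB0
    exact (hdiv 0 le_rfl z hz _ (hadm.contDiff.differentiable one_ne_zero z)).trans
      (mul_le_mul_of_nonneg_left (hmajorant x hx z hz) hC₀)
  rw [hparts, abs_neg, abs_mul, abs_of_pos (inv_pos.2 hx), inv_mul_le_iff₀ hx] at hbound
  exact (le_abs_self _).trans (hbound.trans_eq (by ring))

lemma inv_one_add_sq_mul_add_le (s a : ℝ) {b : ℝ} (hb : 0 ≤ b) :
    (1 + s ^ 2)⁻¹ * (a + b) ≤ (1 + s ^ 2)⁻¹ * a + b := by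
  rw [mul_add]
  gcongr
  exact mul_le_of_le_one_left hb (inv_le_one_of_one_le₀ (by linarith [sq_nonneg s]))

lemma exists_inv_one_add_sq_mul_polyWeight_le (A : Matrix (Fin d) (Fin d) ℝ) (m : ℕ) :
    ∃ C : ℝ, 0 ≤ C ∧ ∀ x, 0 < x → ∀ z, z ≠ 0 → ∀ s : ℝ,
      (1 + s ^ 2)⁻¹ * polyWeight d (2 * m) z ≤ C * ((1 + s ^ 2)⁻¹ * regWeight A m x z
        + x * (polyWeight d (2 * m) z / (‖z‖ ^ 2 + x))) := by
  obtain ⟨C, hC, hsplit⟩ := exists_polyWeight_le_regWeight_add A m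
  refine ⟨C, hC, fun x hx z hz s => ?_⟩
  have hpoly : 0 ≤ x * (polyWeight d (2 * m) z / (‖z‖ ^ 2 + x)) := by
    unfold polyWeight
    positivity
  calc (1 + s ^ 2)⁻¹ * polyWeight d (2 * m) z
      ≤ (1 + s ^ 2)⁻¹ * (C * (regWeight A m x z
          + x * (polyWeight d (2 * m) z / (‖z‖ ^ 2 + x)))) :=
        mul_le_mul_of_nonneg_left (hsplit x hx z hz) (by positivity)
    _ ≤ _ := by
        rw [mul_left_comm]
        gcongr
        exact inv_one_add_sq_mul_add_le s _ hpoly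

theorem exists_integral_inv_one_add_sq_mul_polyWeight_le (hA : A.IsSymm) (hdet : A.det ≠ 0)
    (hd : 4 ≤ d) (hm : d ≤ 2 * m + 1) :
    ∃ C : ℝ, 0 ≤ C ∧ ∀ x, 0 < x →
      ∫ z, (1 + (FqR A z / x) ^ 2)⁻¹ * polyWeight d (2 * m) z ≤
        C * (x * (1 + |Real.log x|)) := by
  have : NeZero d := ⟨by lia⟩
  have hd3 : 3 ≤ d := by lia
  obtain ⟨C₀, hC₀, hsplit⟩ := exists_inv_one_add_sq_mul_polyWeight_le A m
  obtain ⟨C₁, hC₁, hreg⟩ := exists_integral_inv_one_add_sq_mul_regWeight_le hA hdet hd3 hm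
  obtain ⟨C₂, hC₂, hlog⟩ := exists_integral_polyWeight_div_add_le hd (Nat.le_succ_of_le hm)
  refine ⟨C₀ * ((C₁ + 1) * C₂), by positivity, fun x hx => ?_⟩
  have hregInt := integrable_inv_one_add_sq_mul (A := A) x
    (isFlowAdmissible_regWeight hdet hd3 hm hx).integrable
  have hlogInt := (integrable_polyWeight_div_add hd3 hm hx).const_mul x
  calc ∫ z, (1 + (FqR A z / x) ^ 2)⁻¹ * polyWeight d (2 * m) z
      ≤ ∫ z, C₀ * ((1 + (FqR A z / x) ^ 2)⁻¹ * regWeight A m x z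
          + x * (polyWeight d (2 * m) z / (‖z‖ ^ 2 + x))) := by
        refine integral_mono_ae (integrable_inv_one_add_sq_mul x (integrable_polyWeight hd3 hm))
          ((hregInt.add hlogInt).const_mul C₀) ?_
        filter_upwards [Measure.ae_ne volume 0] with z hz
        exact hsplit x hx z hz _
    _ = C₀ * ((∫ z, (1 + (FqR A z / x) ^ 2)⁻¹ * regWeight A m x z)
          + x * ∫ z, polyWeight d (2 * m) z / (‖z‖ ^ 2 + x)) := by
        rw [integral_const_mul, integral_add hregInt hlogInt, integral_const_mul]
    _ ≤ C₀ * ((C₁ + 1) * (x * (C₂ * (1 + |Real.log x|)))) := by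
        rw [add_mul, one_mul]
        gcongr
        · exact (hreg x hx).trans (by gcongr; exact hlog x hx)
        · exact hlog x hx
    _ = _ := by ring

end RegularizedWeight

section MainEstimate

variable {d : ℕ} {A : Matrix (Fin d) (Fin d) ℝ} {w : (Fin d → ℝ) → ℝ} {x : ℝ}

lemma wNorm_nonneg (n : ℕ) (r : ℝ) (w : (Fin d → ℝ) → ℝ) : 0 ≤ wNorm n r w := by
  refine Real.sSup_nonneg ?_
  rintro _ ⟨k, z, -, rfl⟩
  have : 0 ≤ jap z := zero_le_one.trans (le_max_left _ _)
  positivity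

lemma norm_iteratedFDeriv_le_wNorm {n k j : ℕ} (hw : MemC n k w) (hj : j ≤ n) (z : Fin d → ℝ) :
    ‖iteratedFDeriv ℝ j w z‖ ≤ 2 ^ k * wNorm n k w * ((1 + ‖z‖) ^ k)⁻¹ := by
  have hjap : 1 + ‖z‖ ≤ 2 * jap z := by
    unfold jap
    linarith [le_max_left 1 ‖z‖, le_max_right 1 ‖z‖]
  have hsup : ‖iteratedFDeriv ℝ j w z‖ * jap z ^ k ≤ wNorm n k w :=
    le_csSup hw.2 ⟨j, z, hj, by rw [Real.rpow_natCast]⟩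
  rw [← div_eq_mul_inv, le_div_iff₀ (by positivity)]
  calc ‖iteratedFDeriv ℝ j w z‖ * (1 + ‖z‖) ^ k
      ≤ ‖iteratedFDeriv ℝ j w z‖ * (2 * jap z) ^ k := by gcongr
    _ = 2 ^ k * (‖iteratedFDeriv ℝ j w z‖ * jap z ^ k) := by ring
    _ ≤ 2 ^ k * wNorm n k w := by gcongr

lemma abs_le_wNorm {n k : ℕ} (hw : MemC n k w) (z : Fin d → ℝ) :
    |w z| ≤ 2 ^ k * wNorm n k w * ((1 + ‖z‖) ^ k)⁻¹ := by
  simpa only [norm_iteratedFDeriv_zero, Real.norm_eq_abs] using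
    norm_iteratedFDeriv_le_wNorm hw n.zero_le z

lemma flowMajorant_le_wNorm {n k : ℕ} (hw : MemC 1 (k + 1 : ℕ) w) (hnk : n ≤ k) {z : Fin d → ℝ}
    (hz : z ≠ 0) : flowMajorant w z ≤ 2 ^ (k + 1) * wNorm 1 (k + 1 : ℕ) w * polyWeight d n z := by
  have := norm_pos_iff.2 hz
  have hfderiv := norm_iteratedFDeriv_le_wNorm hw le_rfl z
  have hvalue := abs_le_wNorm hw z
  rw [norm_iteratedFDeriv_one] at hfderiv
  set B := 2 ^ (k + 1) * wNorm 1 (k + 1 : ℕ) w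
  have hB : 0 ≤ B := mul_nonneg (by positivity) (wNorm_nonneg _ _ _)
  calc flowMajorant w z
      ≤ B * ((1 + ‖z‖) ^ (k + 1))⁻¹ / ‖z‖ + B * ((1 + ‖z‖) ^ (k + 1))⁻¹ / ‖z‖ ^ 2 := by
        unfold flowMajorant
        gcongr
    _ = B * polyWeight d k z := by
        unfold polyWeight
        field_simp
        ring
    _ ≤ B * polyWeight d n z := by
        unfold polyWeight
        gcongr
        exact le_add_of_nonneg_right (norm_nonneg z)

lemma isFlowAdmissible_of_memC (hd : 3 ≤ d) (hw : MemC 1 (d + 1 : ℕ) w) : IsFlowAdmissible w := by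
  have : NeZero d := ⟨by lia⟩
  have hcd : ContDiff ℝ 1 w := mod_cast hw.1
  refine ⟨hcd, ?_, ?_⟩
  · exact ((integrable_inv_one_add_norm_pow d.lt_succ_self).const_mul _).mono'
      hcd.continuous.aestronglyMeasurable (ae_of_all _ (abs_le_wNorm hw))
  · refine ((integrable_polyWeight hd d.le_succ).const_mul
      (2 ^ (d + 1) * wNorm 1 (d + 1 : ℕ) w)).mono'
      (measurable_flowMajorant hcd.continuous.measurable).aestronglyMeasurable ?_
    filter_upwards [Measure.ae_ne volume 0] with z hz
    rw [Real.norm_of_nonneg (flowMajorant_nonneg w z)]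
    exact flowMajorant_le_wNorm hw le_rfl hz

lemma integral_abs_le_wNorm (hw : MemC 1 (d + 1 : ℕ) w) :
    ∫ z, |w z| ≤
      2 ^ (d + 1) * (∫ z : Fin d → ℝ, ((1 + ‖z‖) ^ (d + 1))⁻¹) * wNorm 1 (d + 1 : ℕ) w := by
  rw [mul_right_comm, ← integral_const_mul]
  exact integral_mono_of_nonneg (ae_of_all _ fun z => abs_nonneg _)
    ((integrable_inv_one_add_norm_pow d.lt_succ_self).const_mul _) (ae_of_all _ (abs_le_wNorm hw))

lemma exists_integral_inv_one_add_sq_mul_flowDiv_le (hA : A.IsSymm) (hdet : A.det ≠ 0)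
    (hd : 4 ≤ d) :
    ∃ C : ℝ, 0 ≤ C ∧ ∀ w : (Fin d → ℝ) → ℝ, MemC 1 (d + 1 : ℕ) w → ∀ x, 0 < x →
      ∫ z, (1 + (FqR A z / x) ^ 2)⁻¹ * |flowDiv A 0 w z| ≤
        C * (x * (1 + |Real.log x|)) * wNorm 1 (d + 1 : ℕ) w := by
  have : NeZero d := ⟨by lia⟩
  obtain ⟨C₀, hC₀, hdiv⟩ := exists_abs_flowDiv_le hdet
  obtain ⟨C₁, hC₁, hweight⟩ := exists_integral_inv_one_add_sq_mul_polyWeight_le (m := d / 2)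
    hA hdet hd (by lia)
  refine ⟨C₀ * 2 ^ (d + 1) * C₁, by positivity, fun w hw x hx => ?_⟩
  set B := 2 ^ (d + 1) * wNorm 1 (d + 1 : ℕ) w
  have hB : 0 ≤ B := mul_nonneg (by positivity) (wNorm_nonneg _ _ _)
  have hint := integrable_inv_one_add_sq_mul (A := A) x
    (integrable_polyWeight (n := 2 * (d / 2)) (by lia : 3 ≤ d) (by lia))
  calc ∫ z, (1 + (FqR A z / x) ^ 2)⁻¹ * |flowDiv A 0 w z|
      ≤ ∫ z, C₀ * B * ((1 + (FqR A z / x) ^ 2)⁻¹ * polyWeight d (2 * (d / 2)) z) := by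
        refine integral_mono_of_nonneg (ae_of_all _ fun z => by positivity)
          (hint.const_mul _) ?_
        filter_upwards [Measure.ae_ne volume 0] with z hz
        rw [mul_left_comm]
        refine mul_le_mul_of_nonneg_left ?_ (by positivity)
        have hw1 : ContDiff ℝ 1 w := mod_cast hw.1
        calc |flowDiv A 0 w z| ≤ C₀ * flowMajorant w z :=
              hdiv 0 le_rfl z hz w (hw1.differentiable one_ne_zero z)
          _ ≤ C₀ * (B * polyWeight d (2 * (d / 2)) z) :=
              mul_le_mul_of_nonneg_left (flowMajorant_le_wNorm hw (by lia) hz) hC₀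
          _ = _ := (mul_assoc _ _ _).symm
    _ ≤ C₀ * B * (C₁ * (x * (1 + |Real.log x|))) := by
        rw [integral_const_mul]
        exact mul_le_mul_of_nonneg_left (hweight x hx) (by positivity)
    _ = _ := by ring

theorem exists_abs_integral_mul_hFun_sub_singularIntegral_le (hA : A.IsSymm) (hdet : A.det ≠ 0)
    (hd : 4 ≤ d) :
    ∃ C : ℝ, 0 ≤ C ∧ ∀ w : (Fin d → ℝ) → ℝ, MemC 1 (d + 1 : ℕ) w → ∀ s : ℝ,
      Tendsto (fun ε => 1 / (2 * ε) * ∫ z in {z | |FqR A z| ≤ ε}, w z) (𝓝[>] 0) (𝓝 s) →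
        ∀ x, 0 < x → |(∫ z, w z * hFun x (FqR A z)) - s| ≤
          C * (x * (1 + |Real.log x|)) * wNorm 1 (d + 1 : ℕ) w := by
  have : NeZero d := ⟨by lia⟩
  obtain ⟨C₀, hC₀, hcompare⟩ := exists_abs_integral_mul_hFun_sub_le (d := d)
  obtain ⟨C₁, hC₁, hdiv⟩ := exists_integral_inv_one_add_sq_mul_flowDiv_le hA hdet hd
  set I := 2 ^ (d + 1) * ∫ z : Fin d → ℝ, ((1 + ‖z‖) ^ (d + 1))⁻¹
  have : 0 ≤ I := mul_nonneg (by positivity) (integral_nonneg fun z => by positivity)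
  refine ⟨C₀ * (I + C₁), by positivity, fun w hw s hs x hx => ?_⟩
  have hadm := isFlowAdmissible_of_memC (by lia) hw
  have hnorm := wNorm_nonneg 1 (d + 1 : ℕ) w
  rw [tendsto_nhds_unique hs (tendsto_setIntegral_abs_FqR_le_div hA hdet hadm)]
  have hmass : x * ∫ z, |w z| ≤ I * (x * (1 + |Real.log x|)) * wNorm 1 (d + 1 : ℕ) w := by
    calc x * ∫ z, |w z| ≤ x * (I * wNorm 1 (d + 1 : ℕ) w) := by
          gcongr
          exact integral_abs_le_wNorm hw
      _ ≤ x * (I * wNorm 1 (d + 1 : ℕ) w) * (1 + |Real.log x|) :=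
          le_mul_of_one_le_right (by positivity) (le_add_of_nonneg_right (abs_nonneg _))
      _ = _ := by ring
  calc _ ≤ C₀ * (x * (∫ z, |w z|) + ∫ z, (1 + (FqR A z / x) ^ 2)⁻¹ * |flowDiv A 0 w z|) :=
        hcompare hA hdet hadm hx
    _ ≤ C₀ * (I * (x * (1 + |Real.log x|)) * wNorm 1 (d + 1 : ℕ) w
          + C₁ * (x * (1 + |Real.log x|)) * wNorm 1 (d + 1 : ℕ) w) := by
        gcongr
        exact hdiv w hw x hx
    _ = _ := by ring

lemma one_add_abs_log_le {β : ℝ} (hx : 0 < x) (hβ : 0 < β) (hβ1 : β ≤ 1) :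
    1 + |Real.log x| ≤ 3 * (β ^ 2)⁻¹ * max 1 |Real.log (x / β)| := by
  have hinv : 1 ≤ β⁻¹ := (one_le_inv₀ hβ).2 hβ1
  have hlogβ : |Real.log β| ≤ β⁻¹ := by
    rw [abs_of_nonpos (Real.log_nonpos hβ.le hβ1), ← Real.log_inv]
    exact Real.log_le_self (inv_pos.2 hβ).le
  set T := max 1 |Real.log (x / β)|
  have hT : 1 ≤ T := le_max_left _ _
  calc 1 + |Real.log x| = 1 + |Real.log (x / β) + Real.log β| := by
        rw [Real.log_div hx.ne' hβ.ne', sub_add_cancel]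
    _ ≤ 1 + (|Real.log (x / β)| + |Real.log β|) := by gcongr; exact abs_add_le _ _
    _ ≤ T + (T + β⁻¹) := by gcongr; exact le_max_right _ _
    _ ≤ β⁻¹ ^ 2 * T + (β⁻¹ ^ 2 * T + β⁻¹ ^ 2 * T) := by
        have hTβ : T ≤ β⁻¹ ^ 2 * T := le_mul_of_one_le_left (by positivity) (one_le_pow₀ hinv)
        gcongr
        nlinarith
    _ = 3 * (β ^ 2)⁻¹ * T := by rw [inv_pow]; ring

theorem stmt_11_general (hA : A.IsSymm) (hdet : A.det ≠ 0) (hd : 4 ≤ d) :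
    ∃ C : ℝ, ∀ L : ℝ, 0 < L → ∀ q : ℝ, 0 < q → ∀ β : ℝ, 0 < β → β ≤ 1 →
      ∀ w : (Fin d → ℝ) → ℝ, MemC 1 ((d : ℝ) + 1) w → ∀ s : ℝ,
        Tendsto (fun ε => 1 / (2 * ε) * ∫ z in {z | |FqR A z| ≤ ε}, w z) (𝓝[>] 0) (𝓝 s) →
          |L ^ (d : ℝ) * (∫ z, w z * hFun (q / L) (FqR A z)) - L ^ (d : ℝ) * s| ≤
            C * (β ^ 2)⁻¹ * q * L ^ ((d : ℝ) - 1) * max 1 |Real.log (q / (L * β))|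
              * wNorm 1 ((d : ℝ) + 1) w := by
  obtain ⟨C, hC, hmain⟩ := exists_abs_integral_mul_hFun_sub_singularIntegral_le hA hdet hd
  refine ⟨3 * C, fun L hL q hq β hβ hβ1 w hw s hs => ?_⟩
  rw [← Nat.cast_add_one] at hw ⊢
  have hx : 0 < q / L := by positivity
  have hlog := one_add_abs_log_le hx hβ hβ1
  have hnorm := wNorm_nonneg 1 (d + 1 : ℕ) w
  rw [div_div] at hlog
  rw [← mul_sub, abs_mul, abs_of_pos (Real.rpow_pos_of_pos hL _)]
  calc _ ≤ L ^ (d : ℝ) * (C * (q / L * (3 * (β ^ 2)⁻¹ * max 1 |Real.log (q / (L * β))|))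
          * wNorm 1 (d + 1 : ℕ) w) := by
        gcongr
        exact (hmain w hw s hs _ hx).trans (by gcongr)
    _ = _ := by
        rw [Real.rpow_sub_one hL.ne']
        ring

lemma FqR_map_intCast (A : Matrix (Fin d) (Fin d) ℤ) (z : Fin d → ℝ) :
    FqR (A.map (↑)) z = Fq A z :=
  rfl

end MainEstimate

/-- (Proposition on `I_q(0)`, part b), `d = 4`, `m = 0`):
`I_q(0;A,0,L) = L⁴ σ_∞(w;A,0) + O(β^{−M−1} q^M L^{4−M} ⟨log(q/(Lβ))⟩ ‖w‖_{M,5})`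
`+ O_{C,N}((q^N L^{4−N} + β^N)(‖w‖_{M−1,5} + L q⁻¹ ‖w‖_{0,5}))`. -/
theorem stmt_11 (A : Matrix (Fin 4) (Fin 4) ℤ) (hA : A.IsSymm) (hdet : A.det ≠ 0)
    (heven : ∀ i, 2 ∣ A i i)
    (M : ℕ) (hM1 : 1 ≤ M) (hM2 : M ≤ 1) (Cb : ℝ) (hCb : 0 < Cb) :
    ∃ C₁ : ℝ, ∀ N : ℝ, 0 ≤ N → ∃ C₂ : ℝ,
      ∀ L : ℝ, 1 ≤ L → ∀ q : ℝ, 0 < q → q ≤ Cb * L → ∀ β : ℝ, 0 < β → β ≤ 1 →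
        ∀ w : (Fin 4 → ℝ) → ℝ, MemC M ((4 : ℝ) + 1) w →
          ∀ sigInf : ℝ, IsSigmaInf A 0 w sigInf →
            |L ^ (4 : ℝ) * (∫ z : Fin 4 → ℝ, w z * hFun (q / L) (Fq A z)) -
                L ^ (4 : ℝ) * sigInf| ≤
              C₁ * (β ^ (M + 1))⁻¹ * q ^ M * L ^ ((4 : ℝ) - M) *
                  max 1 |Real.log (q / (L * β))| * wNorm M ((4 : ℝ) + 1) w
              + C₂ * (q ^ N * L ^ ((4 : ℝ) - N) + β ^ N) *
                  (wNorm (M - 1) ((4 : ℝ) + 1) w + L * q⁻¹ * wNorm 0 ((4 : ℝ) + 1) w) := by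
  obtain rfl : M = 1 := le_antisymm hM2 hM1
  have hdetR : (A.map ((↑) : ℤ → ℝ)).det ≠ 0 := by
    simpa only [← Int.cast_det, Int.cast_ne_zero] using hdet
  obtain ⟨C, hC⟩ := stmt_11_general (hA.map _) hdetR le_rfl
  refine ⟨C, fun N _ => ⟨0, fun L hL q hq _ β hβ hβ1 w hw s hs => ?_⟩⟩
  have hs' : Tendsto (fun ε => 1 / (2 * ε) * ∫ z in {z | |FqR (A.map (↑)) z| ≤ ε}, w z)
      (𝓝[>] 0) (𝓝 s) := by
    simpa only [IsSigmaInf, sub_zero, FqR_map_intCast] using hs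
  simpa [FqR_map_intCast] using
    hC L (zero_lt_one.trans_le hL) q hq β hβ hβ1 w (by exact_mod_cast hw) s hs'

end
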